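/- The intersection of Im λ and Im η equals {19/16}. That is: 19/16 ∈ Im λ and 19/16 ∈ Im η, and for all nonzero rational numbers u and v, if λ(u) = η(v) then λ(u) = 19/16. -/

import Mathlib

/-!
For fixed `v` the equation `λ(u) = η(v)` is quadratic in `u`, so `(v² + 4)(v⁴ + 4(v - 1)²)` has to
be a square. With `v = r/s` in lowest terms, `r² + 4s²` and `r⁴ + 4s²(r - s)²` are both squares or
both `17` times a square, since an odd common divisor divides `17` and the common squarefree part
is odd.

Squares: Pythagorean triples lead to `s² = x⁴ + x²y² - y⁴`, whose coprime integral solutions have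
`y = 0` or `x² = y² = 1` by infinite descent.

`17` times squares: factoring in `ℤ[i]`, where `17 = (1 + 4i)(1 - 4i)`, gives a point on the genus
one curve `w² = y⁴ + (14 + 12i)x²y² + (1 + 4i)(1 - 4i)²x⁴` over `ℤ[i]`. It has even `x`, and the
descent through a 2-isogeny shows that the odd part of such an `x` is congruent to `i y` modulo `2`.
Here this makes the imaginary part of a rational integer odd, unless the point is the trivial one,
which is `v = 1/2`.
-/

namespace LambdaEta

local notation "ℤ[i]" => GaussianInt
local notation "I" => (Zsqrtd.sqrtd : GaussianInt)

/-! ### Gaussian integers -/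

theorem I_sq : I ^ 2 = -1 := by decide

theorem isUnit_I : IsUnit I := .of_mul_eq_one (-I) (by decide)

theorem isUnit_cases {u : ℤ[i]} (hu : IsUnit u) : u = 1 ∨ u = -1 ∨ u = I ∨ u = -I := by
  obtain ⟨a, b⟩ := u
  rw [← Zsqrtd.norm_eq_one_iff' (by norm_num), Zsqrtd.norm_def] at hu
  have ha : a ^ 2 ≤ 1 := by linarith [sq_nonneg b]
  have hb : b ^ 2 ≤ 1 := by linarith [sq_nonneg a]
  obtain ⟨ha₁, ha₂⟩ := abs_le.1 ((sq_le_one_iff_abs_le_one a).1 ha)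
  obtain ⟨hb₁, hb₂⟩ := abs_le.1 ((sq_le_one_iff_abs_le_one b).1 hb)
  simp only [Zsqrtd.ext_iff]
  interval_cases a <;> interval_cases b <;> simp_all

theorem norm_mul_of_isUnit {u : ℤ[i]} (hu : IsUnit u) (x : ℤ[i]) : (u * x).norm = x.norm := by
  rw [Zsqrtd.norm_mul, (Zsqrtd.norm_eq_one_iff' (by norm_num) u).2 hu, one_mul]

theorem pow_four_eq_one_of_isUnit {u : ℤ[i]} (hu : IsUnit u) : u ^ 4 = 1 := by
  rcases isUnit_cases hu with rfl | rfl | rfl | rfl <;> decide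

theorem units_cases_of_mul_eq_one {u v : ℤ[i]} (h : u * v = 1) :
    (u = 1 ∧ v = 1) ∨ (u = -1 ∧ v = -1) ∨ (u = I ∧ v = -I) ∨ (u = -I ∧ v = I) := by
  have hv : v = u ^ 3 := by
    linear_combination u ^ 3 * h - v * pow_four_eq_one_of_isUnit (.of_mul_eq_one v h)
  rcases isUnit_cases (.of_mul_eq_one v h) with rfl | rfl | rfl | rfl <;> simp only [hv] <;> decide

theorem prime_of_norm_prime {z : ℤ[i]} (h : z.norm.natAbs.Prime) : Prime z := by
  refine Irreducible.prime ⟨fun hz ↦ ?_, fun a b hab ↦ ?_⟩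
  · exact Nat.not_prime_one (Zsqrtd.norm_eq_one_iff.2 hz ▸ h)
  · rw [hab, Zsqrtd.norm_mul, Int.natAbs_mul, Nat.prime_mul_iff] at h
    simp only [← Zsqrtd.norm_eq_one_iff]
    exact h.symm.imp And.right And.right

theorem prime_one_add_I : Prime (1 + I) := prime_of_norm_prime (by norm_num [Zsqrtd.norm_def])

theorem prime_one_add_two_I : Prime (1 + 2 * I) :=
  prime_of_norm_prime (by norm_num [Zsqrtd.norm_def])

theorem prime_one_add_four_I : Prime (1 + 4 * I) :=
  prime_of_norm_prime (by norm_num [Zsqrtd.norm_def])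

theorem prime_one_sub_four_I : Prime (1 - 4 * I) :=
  prime_of_norm_prime (by norm_num [Zsqrtd.norm_def])

theorem dvd_of_sq_dvd_prime_mul {R : Type*} [CommRing R] [IsDomain R] {p q y : R}
    (hp : Prime p) (hq : Prime q) (h : p ^ 2 ∣ q * y) : p ∣ y := by
  rcases hp.dvd_or_dvd ((dvd_pow_self p two_ne_zero).trans h) with ⟨t, rfl⟩ | hy
  · have ht : IsUnit t := (hq.irreducible.isUnit_or_isUnit rfl).resolve_left hp.not_isUnit
    rw [pow_two, mul_assoc, mul_dvd_mul_iff_left hp.ne_zero] at h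
    exact ht.dvd_mul_left.1 h
  · exact hy

theorem exists_isCoprime_factors {R : Type*} [EuclideanDomain R] {x y : R} (hy : y ≠ 0) :
    ∃ d x' y', d ≠ 0 ∧ x = d * x' ∧ y = d * y' ∧ IsCoprime x' y' := by
  classical
  obtain ⟨x', hx'⟩ := EuclideanDomain.gcd_dvd_left x y
  obtain ⟨y', hy'⟩ := EuclideanDomain.gcd_dvd_right x y
  have hd : EuclideanDomain.gcd x y ≠ 0 := fun h ↦ hy (EuclideanDomain.gcd_eq_zero_iff.1 h).2
  refine ⟨_, x', y', hd, hx', hy', ?_⟩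
  have hb := EuclideanDomain.gcd_eq_gcd_ab x y
  refine ⟨EuclideanDomain.gcdA x y, EuclideanDomain.gcdB x y, mul_left_cancel₀ hd ?_⟩
  linear_combination -hb - EuclideanDomain.gcdA x y * hx' - EuclideanDomain.gcdB x y * hy'

/-- A Gaussian integer is odd if it is prime to `1 + i`; the parity of `re + im` decides this. -/
def IsOdd (z : ℤ[i]) : Prop := (z.re + z.im) % 2 = 1

namespace IsOdd

theorem mul_iff {x y : ℤ[i]} : IsOdd (x * y) ↔ IsOdd x ∧ IsOdd y := by
  have h : (x * y).re + (x * y).im = (x.re + x.im) * (y.re + y.im) - 2 * (x.im * y.im) := by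
    simp only [Zsqrtd.re_mul, Zsqrtd.im_mul]
    ring
  simp only [IsOdd, h, ← Int.odd_iff, Int.odd_sub, Int.odd_mul, even_two.mul_right, iff_true]

theorem mul {x y : ℤ[i]} (hx : IsOdd x) (hy : IsOdd y) : IsOdd (x * y) := mul_iff.2 ⟨hx, hy⟩

theorem of_dvd {x y : ℤ[i]} (h : x ∣ y) (hy : IsOdd y) : IsOdd x := by
  obtain ⟨z, rfl⟩ := h
  exact (mul_iff.1 hy).1

theorem pow {x : ℤ[i]} (hx : IsOdd x) (n : ℕ) : IsOdd (x ^ n) := by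
  induction n with
  | zero => simp [IsOdd]
  | succ n ih => exact pow_succ x n ▸ ih.mul hx

theorem of_isUnit {z : ℤ[i]} (h : IsUnit z) : IsOdd z :=
  of_dvd (y := 1) h.dvd (by simp [IsOdd])

theorem ne_zero {z : ℤ[i]} (h : IsOdd z) : z ≠ 0 := by
  rintro rfl
  simp [IsOdd] at h

end IsOdd

theorem not_isOdd_iff {z : ℤ[i]} : ¬ IsOdd z ↔ 1 + I ∣ z := by
  constructor
  · intro h
    refine ⟨⟨(z.re + z.im) / 2, (z.im - z.re) / 2⟩, ?_⟩
    simp [IsOdd, Zsqrtd.ext_iff] at h ⊢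
    omega
  · rintro ⟨y, rfl⟩
    simp [IsOdd]
    omega

theorem isOdd_iff {z : ℤ[i]} : IsOdd z ↔ ¬ 1 + I ∣ z := not_isOdd_iff.not_right

theorem IsOdd.add_of_dvd {x y : ℤ[i]} (hx : IsOdd x) (hy : 1 + I ∣ y) : IsOdd (x + y) :=
  isOdd_iff.2 fun h ↦ isOdd_iff.1 hx ((dvd_add_left hy).1 h)

theorem isOdd_one_sub_four_I : IsOdd (1 - 4 * I) := by simp [IsOdd]

theorem IsOdd.sq_emod_eight {z : ℤ[i]} (hz : IsOdd z) :
    ((z ^ 2).re % 8 = 1 ∧ (z ^ 2).im % 8 = 0) ∨ ((z ^ 2).re % 8 = 7 ∧ (z ^ 2).im % 8 = 0) ∨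
      ((z ^ 2).re % 8 = 3 ∧ (z ^ 2).im % 8 = 4) ∨ ((z ^ 2).re % 8 = 5 ∧ (z ^ 2).im % 8 = 4) := by
  obtain ⟨a, b⟩ := z
  simp only [IsOdd] at hz
  simp only [pow_two, Zsqrtd.re_mul, Zsqrtd.im_mul]
  rcases Int.even_or_odd' a with ⟨m, rfl | rfl⟩ <;>
    rcases Int.even_or_odd' b with ⟨n, rfl | rfl⟩ <;>
    obtain ⟨r, hr⟩ := Int.even_mul_succ_self m <;>
    obtain ⟨s, hs⟩ := Int.even_mul_succ_self n <;>
    ring_nf at hr hs ⊢ <;> omega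

theorem IsOdd.sq_eq {z : ℤ[i]} (hz : IsOdd z) : ∃ w, z ^ 2 = 1 + 4 * w ∨ z ^ 2 = -1 + 4 * w := by
  refine ⟨⟨((z ^ 2).re + 1) / 4, (z ^ 2).im / 4⟩, ?_⟩
  simp [Zsqrtd.ext_iff]
  have := hz.sq_emod_eight
  omega

theorem IsOdd.pow_four_emod_eight {z : ℤ[i]} (hz : IsOdd z) :
    (z ^ 4).re % 8 = 1 ∧ (z ^ 4).im % 8 = 0 := by
  obtain ⟨w, hw⟩ : ∃ w, z ^ 4 = 1 + 8 * w := by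
    obtain ⟨w, hw | hw⟩ := hz.sq_eq
    · exact ⟨w + 2 * w ^ 2, by grind⟩
    · exact ⟨-w + 2 * w ^ 2, by grind⟩
  simp [hw]

theorem IsOdd.sq_re_emod_four {z : ℤ[i]} (hz : IsOdd z) :
    ((z ^ 2).re % 4 = 1 ∧ z.im % 2 = 0) ∨ ((z ^ 2).re % 4 = 3 ∧ z.re % 2 = 0) := by
  obtain ⟨a, b⟩ := z
  simp only [IsOdd] at hz
  simp only [pow_two, Zsqrtd.re_mul]
  rcases Int.even_or_odd' a with ⟨m, rfl | rfl⟩ <;>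
    rcases Int.even_or_odd' b with ⟨n, rfl | rfl⟩ <;>
    ring_nf <;> omega

theorem IsOdd.sq_mul_sq_emod_four {x y : ℤ[i]} (hx : IsOdd x) (hy : IsOdd y) :
    (((x ^ 2).re - (y ^ 2).re) % 4 = 0 ∧ ((x ^ 2 * y ^ 2).re) % 4 = 1) ∨
      (((x ^ 2).re - (y ^ 2).re) % 4 = 2 ∧ ((x ^ 2 * y ^ 2).re) % 4 = 3) := by
  obtain ⟨w, hw | hw⟩ := hx.sq_eq <;> obtain ⟨t, ht | ht⟩ := hy.sq_eq <;> rw [hw, ht] <;>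
    simp <;> ring_nf <;> omega

/-! ### Coprime factors of fourth powers -/

theorem dvd_left_or_dvd_right_of_isCoprime {R : Type*} [CommRing R] [IsDomain R] {a b y p : R}
    (hab : IsCoprime a b) (hp : Prime p) (n : ℕ) (h : a * b = p ^ n * y) :
    (∃ a', a = p ^ n * a' ∧ a' * b = y) ∨ (∃ b', b = p ^ n * b' ∧ a * b' = y) := by
  have hpn : p ^ n ≠ 0 := pow_ne_zero _ hp.ne_zero
  by_cases hb : p ∣ b
  · have ha : ¬ p ∣ a := fun ha ↦ hp.not_isUnit (hab.isUnit_of_dvd' ha hb)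
    obtain ⟨b', rfl⟩ := hp.pow_dvd_of_dvd_mul_left n ha ⟨y, h⟩
    exact .inr ⟨b', rfl, mul_left_cancel₀ hpn (by rw [← h]; ring)⟩
  · obtain ⟨a', rfl⟩ := hp.pow_dvd_of_dvd_mul_right n hb ⟨y, h⟩
    exact .inl ⟨a', rfl, mul_left_cancel₀ hpn (by rw [← h]; ring)⟩

theorem exists_fourth_powers_of_mul_eq {a b y : ℤ[i]} (hab : IsCoprime a b) (hy : y ≠ 0)
    (h : a * b = y ^ 4) :
    ∃ u v k l, u * v = 1 ∧ a = u * k ^ 4 ∧ b = v * l ^ 4 ∧ y = k * l := by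
  obtain ⟨k, u, hu⟩ := exists_associated_pow_of_associated_pow_mul hab (.of_eq h.symm)
  obtain ⟨l, v, hv⟩ := exists_associated_pow_of_associated_pow_mul hab.symm
    (.of_eq (h ▸ mul_comm b a).symm)
  have hkl : (k * l) ^ 4 * (u * v) = y ^ 4 := by rw [← h, ← hu, ← hv]; ring
  obtain ⟨o, ho⟩ : k * l ∣ y :=
    (IsIntegrallyClosed.pow_dvd_pow_iff four_ne_zero).1 ⟨_, hkl.symm⟩
  have huv : (u : ℤ[i]) * v = o ^ 4 := by
    refine mul_left_cancel₀ (left_ne_zero_of_mul (hkl ▸ pow_ne_zero 4 hy)) ?_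
    rw [hkl, ho, mul_pow]
  have ho4 : o ^ 4 = 1 := by
    refine pow_four_eq_one_of_isUnit ((isUnit_pow_iff four_ne_zero).1 ?_)
    exact huv ▸ (u * v).isUnit
  refine ⟨u, v, k, l * o, huv.trans ho4, by rw [← hu, mul_comm], ?_, by rw [ho, mul_assoc]⟩
  rw [← hv, mul_pow, ho4, mul_one, mul_comm]

/-- The prime power `pⁿ` is distributed over coprime factors `d k⁴` and `d' l⁴`: `d` and `d'` are
`1` and `pⁿ` in some order, and `p` does not divide that one of `k` and `l` which goes with `1`. -/
def IsSplit (p : ℤ[i]) (n : ℕ) (d d' k l : ℤ[i]) : Prop :=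
  (d = 1 ∧ d' = p ^ n ∧ ¬ p ∣ k) ∨ (d = p ^ n ∧ d' = 1 ∧ ¬ p ∣ l)

theorem IsSplit.left {p d d' k l : ℤ[i]} {n : ℕ} (h : IsSplit p n d d' k l) :
    d = 1 ∨ d = p ^ n :=
  Or.imp And.left And.left h

theorem IsSplit.right {p d d' k l : ℤ[i]} {n : ℕ} (h : IsSplit p n d d' k l) :
    d' = 1 ∨ d' = p ^ n :=
  (Or.imp (·.2.1) (·.2.1) h).symm

theorem exists_fourth_powers_of_mul_eq_prime_pow_mul {a b y p : ℤ[i]} {n : ℕ}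
    (hab : IsCoprime a b) (hp : Prime p) (hn : n ≠ 0) (hy : y ≠ 0) (h : a * b = p ^ n * y ^ 4) :
    ∃ d d' u v k l, IsSplit p n d d' k l ∧ u * v = 1 ∧ a = u * (d * k ^ 4) ∧ b = v * (d' * l ^ 4) ∧
      y = k * l ∧ IsCoprime k l := by
  have not_dvd {s t u v k l : ℤ[i]} (hst : IsCoprime s t) (hs : s = p ^ n * (u * k ^ 4))
      (ht : t = v * l ^ 4) : ¬ p ∣ l := fun hl ↦ hp.not_isUnit <| hst.isUnit_of_dvd'
    (hs ▸ (dvd_pow_self p hn).mul_right _) (ht ▸ (dvd_pow hl four_ne_zero).mul_left _)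
  rcases dvd_left_or_dvd_right_of_isCoprime hab hp n h with ⟨a', rfl, ha'⟩ | ⟨b', rfl, hb'⟩
  · obtain ⟨u, v, k, l, huv, rfl, rfl, rfl⟩ :=
      exists_fourth_powers_of_mul_eq hab.of_mul_left_right hy ha'
    refine ⟨p ^ n, 1, u, v, k, l, .inr ⟨rfl, rfl, not_dvd hab rfl rfl⟩, huv, by ring, by ring, rfl,
      ?_⟩
    exact (IsCoprime.pow_iff four_pos four_pos).1
      hab.of_mul_left_right.of_mul_left_right.of_mul_right_right
  · obtain ⟨u, v, k, l, huv, rfl, rfl, rfl⟩ :=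
      exists_fourth_powers_of_mul_eq hab.of_mul_right_right hy hb'
    refine ⟨1, p ^ n, u, v, k, l, .inl ⟨rfl, rfl, not_dvd hab.symm rfl rfl⟩, huv, by ring, by ring,
      rfl, ?_⟩
    exact (IsCoprime.pow_iff four_pos four_pos).1
      hab.of_mul_right_right.of_mul_left_right.of_mul_right_right

theorem exists_fourth_powers_of_mul_eq_prime_mul {a b y p q : ℤ[i]} {n : ℕ} (hab : IsCoprime a b)
    (hp : Prime p) (hq : Prime q) (hn : n ≠ 0) (hy : y ≠ 0) (h : a * b = q * (p ^ n * y ^ 4)) :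
    ∃ d d' u v k l, IsSplit p n d d' k l ∧ u * v = 1 ∧ y = k * l ∧ IsCoprime k l ∧
      ((a = u * (d * k ^ 4) ∧ b = q * (v * (d' * l ^ 4))) ∨
        (b = u * (d * k ^ 4) ∧ a = q * (v * (d' * l ^ 4)))) := by
  wlog hb : ∃ b', b = q ^ 1 * b' ∧ a * b' = p ^ n * y ^ 4 generalizing a b
  · rcases dvd_left_or_dvd_right_of_isCoprime hab hq 1 (by rwa [pow_one]) with ⟨a', ha, hba⟩ | hb'
    · obtain ⟨d, d', u, v, k, l, hd, huv, rfl, hkl, hab'⟩ := this hab.symm (mul_comm a b ▸ h)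
        ⟨a', ha, mul_comm a' b ▸ hba⟩
      exact ⟨d, d', u, v, k, l, hd, huv, rfl, hkl, hab'.symm⟩
    · exact absurd hb' hb
  obtain ⟨b', rfl, hb'⟩ := hb
  obtain ⟨d, d', u, v, k, l, hd, huv, ha, rfl, hy, hkl⟩ :=
    exists_fourth_powers_of_mul_eq_prime_pow_mul hab.of_mul_right_right hp hn hy hb'
  exact ⟨d, d', u, v, k, l, hd, huv, hy, hkl, .inl ⟨ha, by rw [pow_one]⟩⟩

theorem exists_add_eq_of_mul_eq_prime_mul_pow_four {a b q y : ℤ[i]} (hab : IsCoprime a b)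
    (hq : Prime q) (hy : y ≠ 0) (h : a * b = q * y ^ 4) :
    ∃ u v k l, u * v = 1 ∧ y = k * l ∧ a + b = u * k ^ 4 + q * (v * l ^ 4) := by
  rcases dvd_left_or_dvd_right_of_isCoprime hab hq 1 (by rwa [pow_one]) with
    ⟨a', rfl, ha'⟩ | ⟨b', rfl, hb'⟩
  · obtain ⟨u, v, k, l, huv, rfl, rfl, rfl⟩ :=
      exists_fourth_powers_of_mul_eq hab.of_mul_left_right hy ha'
    exact ⟨v, u, l, k, by rw [mul_comm, huv], mul_comm k l, by ring⟩
  · obtain ⟨u, v, k, l, huv, rfl, rfl, rfl⟩ :=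
      exists_fourth_powers_of_mul_eq hab.of_mul_right_right hy hb'
    exact ⟨u, v, k, l, huv, rfl, by ring⟩

theorem exists_sq_eq_of_mul_eq_one {u v : ℤ[i]} (huv : u * v = 1) (hu : u.im = 0) :
    ∃ ω, IsUnit ω ∧ u = ω ^ 2 ∧ v = ω ^ 2 := by
  rcases units_cases_of_mul_eq_one huv with ⟨rfl, rfl⟩ | ⟨rfl, rfl⟩ | ⟨rfl, rfl⟩ | ⟨rfl, rfl⟩
  · exact ⟨1, isUnit_one, by decide, by decide⟩
  · exact ⟨I, isUnit_I, by decide, by decide⟩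
  · simp at hu
  · simp at hu

theorem isCoprime_of_mul_eq_prime_mul {R : Type*} [CommRing R] [IsDomain R] [IsPrincipalIdealRing R]
    {a b q m : R} (hq : Prime q) (hm : m ≠ 0) (h : a * b = q * m) (hco : IsCoprime m (a + b)) :
    IsCoprime a b := by
  have hab : a * b ≠ 0 := h ▸ mul_ne_zero hq.ne_zero hm
  refine isCoprime_of_prime_dvd (fun h0 ↦ left_ne_zero_of_mul hab h0.1) fun r hr hra hrb ↦ ?_
  have hrm : r ^ 2 ∣ q * m := by rw [← h, pow_two]; exact mul_dvd_mul hra hrb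
  exact hr.not_isUnit (hco.isUnit_of_dvd' (dvd_of_sq_dvd_prime_mul hr hq hrm) (dvd_add hra hrb))

theorem IsOdd.isCoprime_one_add_I {z : ℤ[i]} (hz : IsOdd z) : IsCoprime z (1 + I) :=
  (prime_one_add_I.coprime_iff_not_dvd.2 (isOdd_iff.1 hz)).symm

theorem IsOdd.isCoprime_two {z : ℤ[i]} (hz : IsOdd z) : IsCoprime z 2 := by
  rw [show (2 : ℤ[i]) = (1 + I) ^ 2 * -I by decide]
  exact (isCoprime_mul_unit_right_right isUnit_I.neg _ _).2 hz.isCoprime_one_add_I.pow_right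

theorem one_sub_four_I_dvd_of_dvd_sq_sub {y z : ℤ[i]}
    (h : 1 - 4 * I ∣ y ^ 2 - (1 + 2 * I) * z ^ 2) : 1 - 4 * I ∣ y := by
  let f : ℤ[i] →+* ZMod 17 := Zsqrtd.lift ⟨13, by decide⟩
  have hf (x : ℤ[i]) : f x = ((x.re + x.im * 13 : ℤ) : ZMod 17) := by simp [f, Zsqrtd.lift]
  have hfI : f I = 13 := by simp [hf]
  have hfy : f y = 0 := by
    obtain ⟨t, ht⟩ := h
    have hft := congrArg f ht
    simp only [map_sub, map_mul, map_pow, map_add, map_one, map_ofNat, hfI] at hft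
    -- modulo `1 - 4 * I` the prime `1 + 2 * I` becomes `10`, a nonresidue modulo `17`
    have key : ∀ a b c : ZMod 17, a ^ 2 - (1 + 2 * 13) * b ^ 2 = (1 - 4 * 13) * c → a = 0 := by
      intro a b c
      rw [show (1 - 4 * 13 : ZMod 17) = 0 by decide, zero_mul]
      revert a b
      decide
    exact key _ _ _ hft
  rw [hf, ZMod.intCast_zmod_eq_zero_iff_dvd] at hfy
  obtain ⟨t, ht⟩ := hfy
  refine ⟨⟨t - y.im, 4 * t - 3 * y.im⟩, ?_⟩
  simp [Zsqrtd.ext_iff] at ht ⊢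
  omega

theorem IsOdd.mul_pow_four_emod_eight {d z : ℤ[i]} (hz : IsOdd z)
    (hd : d = 1 ∨ d = (1 - 4 * I) ^ 2) : (d * z ^ 4).re % 8 = 1 ∧ (d * z ^ 4).im % 8 = 0 := by
  have hz4 := hz.pow_four_emod_eight
  rcases hd with rfl | rfl
  · rwa [one_mul]
  · rw [show (1 - 4 * I) ^ 2 = -15 - 8 * I by decide]
    generalize z ^ 4 = w at *
    simp
    omega

theorem IsSplit.emod_eight {d d' k l : ℤ[i]}
    (hd : IsSplit (1 - 4 * I) 2 d d' k l) (hk : IsOdd k) (hl : IsOdd l) :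
    ((d * k ^ 4).re % 8 = 1 ∧ (d * k ^ 4).im % 8 = 0) ∧
      ((d' * l ^ 4).re % 8 = 1 ∧ (d' * l ^ 4).im % 8 = 0) :=
  ⟨hk.mul_pow_four_emod_eight hd.left,
    hl.mul_pow_four_emod_eight hd.right⟩

/-! ### A genus one curve and its 2-isogeny -/

/-- The genus one curve `w² = y⁴ + (14 + 12i)x²y² + (1 + 4i)(1 - 4i)²x⁴` on which the descent takes
place, in weighted homogeneous coordinates. -/
def OnQuartic (w x y : ℤ[i]) : Prop :=
  w ^ 2 = y ^ 4 + (14 + 12 * I) * x ^ 2 * y ^ 2 + (1 + 4 * I) * (1 - 4 * I) ^ 2 * x ^ 4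

/-- The curve `w² = (1 + 4i)x⁴ + (14 + 12i)x²y² + (1 - 4i)²y⁴`, which arises from `OnQuartic` by
distributing the constant `(1 + 4i)(1 - 4i)²` over the two outer terms. -/
def OnTwist (w x y : ℤ[i]) : Prop :=
  w ^ 2 = (1 + 4 * I) * x ^ 4 + (14 + 12 * I) * x ^ 2 * y ^ 2 + (1 - 4 * I) ^ 2 * y ^ 4

theorem IsOdd.exists_sq_eq {z : ℤ[i]} (hz : IsOdd z) : ∃ w, z ^ 2 = 1 + 2 * w := by
  obtain ⟨w, hw | hw⟩ := hz.sq_eq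
  · exact ⟨2 * w, by rw [hw]; ring⟩
  · exact ⟨-1 + 2 * w, by rw [hw]; ring⟩

theorem IsOdd.sq_re_sub_sq_re_of_onTwist {k x y : ℤ[i]} (hk : IsOdd k) (hx : IsOdd x) (hy : IsOdd y)
    (h : OnTwist (2 * k) x y) : ((x ^ 2).re - (y ^ 2).re) % 4 = 2 := by
  have h' : 4 * k ^ 2 = (1 + 4 * I) * x ^ 4 + (14 + 12 * I) * (x ^ 2 * y ^ 2)
      + (-15 - 8 * I) * y ^ 4 := by
    rw [OnTwist] at h
    grind [I_sq]
  have hre := congrArg Zsqrtd.re h'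
  have hk2 := hk.sq_emod_eight
  have hx4 := hx.pow_four_emod_eight
  have hy4 := hy.pow_four_emod_eight
  have hxy := hx.sq_mul_sq_emod_four hy
  have hxy' := (hx.mul hy).sq_emod_eight
  rw [mul_pow] at hxy'
  generalize x ^ 2 * y ^ 2 = xy at *
  simp at hre
  omega

theorem not_onTwist_two_mul {k x y : ℤ[i]} (hk : IsOdd k) (hx : IsOdd x) (hy : IsOdd y)
    (hxy : IsCoprime x y) (hcx : ¬ 1 - 4 * I ∣ x) : ¬ OnTwist (2 * k) x y := by
  intro h
  obtain ⟨r, hr⟩ := hx.exists_sq_eq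
  obtain ⟨s, hs⟩ := hy.exists_sq_eq
  obtain ⟨t, ht⟩ : ∃ t, 2 * t = (1 - 4 * I) * y ^ 2 + (2 * I - 1) * x ^ 2 :=
    ⟨-I + (1 - 4 * I) * s + (2 * I - 1) * r, by rw [hr, hs]; ring⟩
  have hadd : t + k + (t - k) = (1 - 4 * I) * y ^ 2 + (2 * I - 1) * x ^ 2 := by rw [← ht]; ring
  have hmul : (t + k) * (t - k) = -(1 + 2 * I) * x ^ 4 := by
    rw [OnTwist] at h
    refine mul_left_cancel₀ (show (4 : ℤ[i]) ≠ 0 by decide) ?_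
    grind [I_sq]
  have hco : IsCoprime (t + k) (t - k) := by
    refine isCoprime_of_mul_eq_prime_mul prime_one_add_two_I.neg (pow_ne_zero 4 hx.ne_zero) hmul
      (IsCoprime.pow_left ?_)
    rw [hadd, pow_two x, ← mul_assoc]
    refine (IsCoprime.mul_right ?_ hxy.pow_right).add_mul_right_right _
    exact (prime_one_sub_four_I.coprime_iff_not_dvd.2 hcx).symm
  obtain ⟨u, v, p, q, huv, rfl, hpq⟩ :=
    exists_add_eq_of_mul_eq_prime_mul_pow_four hco prime_one_add_two_I.neg hx.ne_zero hmul
  have hp4 := (IsOdd.mul_iff.1 hx).1.pow_four_emod_eight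
  have hq4 := (IsOdd.mul_iff.1 hx).2.pow_four_emod_eight
  have hx2 := hx.sq_emod_eight
  have hy2 := hy.sq_emod_eight
  have hxy2 := hk.sq_re_sub_sq_re_of_onTwist hx hy h
  rw [hadd] at hpq
  have hre := congrArg Zsqrtd.re hpq
  have him := congrArg Zsqrtd.im hpq
  rcases units_cases_of_mul_eq_one huv with ⟨rfl, rfl⟩ | ⟨rfl, rfl⟩ | ⟨rfl, rfl⟩ | ⟨rfl, rfl⟩ <;>
    simp at hre him <;> omega

/-- The curve `z² = x⁴ - (7 + 6i)x²y² - (1 + 2i)(1 - 4i)²y⁴`, which is 2-isogenous to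
`OnQuartic`. -/
def OnIsogenous (z x y : ℤ[i]) : Prop :=
  z ^ 2 = x ^ 4 - (7 + 6 * I) * x ^ 2 * y ^ 2 - (1 + 2 * I) * (1 - 4 * I) ^ 2 * y ^ 4

theorem OnQuartic.two_dvd {w x y : ℤ[i]} (h : OnQuartic w x y) (hx : IsOdd x) (hy : IsOdd y) :
    2 ∣ w := by
  obtain ⟨r, hr⟩ := hx.exists_sq_eq
  obtain ⟨s, hs⟩ := hy.exists_sq_eq
  rw [← IsIntegrallyClosed.pow_dvd_pow_iff two_ne_zero]
  refine ⟨s + s ^ 2 + (7 + 6 * I) * (r + s + 2 * r * s) + (17 - 68 * I) * (r + r ^ 2)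
    + 8 - 14 * I, ?_⟩
  rw [OnQuartic] at h
  grind [I_sq]

theorem isCoprime_one_sub_four_I_sq_mul_pow_four {x s : ℤ[i]} (hs : ¬ 1 - 4 * I ∣ s)
    (hxs : IsCoprime x s) : IsCoprime ((1 - 4 * I) ^ 2 * x ^ 4) s :=
  .mul_left (prime_one_sub_four_I.coprime_iff_not_dvd.2 hs).pow_left hxs.pow_left

theorem OnQuartic.exists_add_eq {w x y : ℤ[i]} (h : OnQuartic w x y) (hx : IsOdd x) (hy : IsOdd y)
    (hcy : ¬ 1 - 4 * I ∣ y) (hxy : IsCoprime x y) :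
    ∃ d d' u v k l, IsSplit (1 - 4 * I) 2 d d' k l ∧ u * v = 1 ∧ x = k * l ∧ IsCoprime k l ∧
      y ^ 2 + (7 + 6 * I) * x ^ 2 = u * (d * k ^ 4) - (1 + 2 * I) * (v * (d' * l ^ 4)) := by
  obtain ⟨w, rfl⟩ := h.two_dvd hx hy
  obtain ⟨r, hr⟩ := hx.exists_sq_eq
  obtain ⟨s, hs⟩ := hy.exists_sq_eq
  obtain ⟨t, ht⟩ : ∃ t, 2 * t = y ^ 2 + (7 + 6 * I) * x ^ 2 :=
    ⟨4 + 3 * I + s + (7 + 6 * I) * r, by rw [hr, hs]; ring⟩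
  have hadd : t + w + (t - w) = y ^ 2 + (7 + 6 * I) * x ^ 2 := by rw [← ht]; ring
  have hmul : (t + w) * (t - w) = -(1 + 2 * I) * ((1 - 4 * I) ^ 2 * x ^ 4) := by
    rw [OnQuartic] at h
    refine mul_left_cancel₀ (show (4 : ℤ[i]) ≠ 0 by decide) ?_
    grind [I_sq]
  have hcs : ¬ 1 - 4 * I ∣ t + w + (t - w) := by
    rw [hadd, show 7 + 6 * I = (1 - 4 * I) * (2 * I - 1) by decide, mul_assoc, dvd_add_left
      (dvd_mul_right _ _)]
    exact fun hc ↦ hcy (prime_one_sub_four_I.dvd_of_dvd_pow hc)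
  have hxs : IsCoprime x (t + w + (t - w)) := by
    rw [hadd, pow_two x, mul_left_comm]
    exact hxy.pow_right.add_mul_left_right _
  obtain ⟨d, d', u, v, k, l, hd, huv, hkl, hco, hab⟩ :=
    exists_fourth_powers_of_mul_eq_prime_mul (isCoprime_of_mul_eq_prime_mul prime_one_add_two_I.neg
      (mul_ne_zero (by decide) (pow_ne_zero 4 hx.ne_zero)) hmul
      (isCoprime_one_sub_four_I_sq_mul_pow_four hcs hxs)) prime_one_sub_four_I
      prime_one_add_two_I.neg two_ne_zero hx.ne_zero hmul
  refine ⟨d, d', u, v, k, l, hd, huv, hkl, hco, ?_⟩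
  rw [← hadd]
  rcases hab with ⟨ha, hb⟩ | ⟨hb, ha⟩ <;> rw [ha, hb] <;> ring

theorem OnQuartic.exists_onIsogenous {w x y : ℤ[i]} (h : OnQuartic w x y) (hx : IsOdd x)
    (hy : IsOdd y) (hcy : ¬ 1 - 4 * I ∣ y) (hxy : IsCoprime x y) :
    ∃ k l z, OnIsogenous z k l ∧ IsOdd k ∧ IsOdd l ∧ IsOdd z ∧ IsCoprime k l ∧ ¬ 1 - 4 * I ∣ z ∧
      x.norm = k.norm * l.norm := by
  obtain ⟨d, d', u, v, k, l, hd, huv, rfl, hkl, hsum⟩ := h.exists_add_eq hx hy hcy hxy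
  obtain ⟨hk, hl⟩ := IsOdd.mul_iff.1 hx
  obtain ⟨ω, hω, rfl, rfl⟩ : ∃ ω, IsUnit ω ∧ u = ω ^ 2 ∧ v = ω ^ 2 := by
    refine exists_sq_eq_of_mul_eq_one huv ?_
    have hre := congrArg Zsqrtd.re hsum
    have him := congrArg Zsqrtd.im hsum
    have hdk := hd.emod_eight hk hl
    have hx2 := hx.sq_emod_eight
    have hy2 := hy.sq_emod_eight
    clear hd
    generalize d * k ^ 4 = D at *
    generalize d' * l ^ 4 = D' at *
    rcases units_cases_of_mul_eq_one huv with ⟨rfl, rfl⟩ | ⟨rfl, rfl⟩ | ⟨rfl, rfl⟩ | ⟨rfl, rfl⟩ <;>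
      simp at hre him ⊢ <;> omega
  rcases hd with ⟨rfl, rfl, -⟩ | ⟨rfl, rfl, -⟩
  · refine ⟨ω * k, l, ω * y, ?_, .mul (.of_isUnit hω) hk, hl, .mul (.of_isUnit hω) hy,
      (isCoprime_mul_unit_left_left hω _ _).2 hkl, ?_, ?_⟩
    · rw [OnIsogenous]
      grind [I_sq, pow_four_eq_one_of_isUnit hω]
    · rwa [hω.dvd_mul_left]
    · rw [norm_mul_of_isUnit hω, Zsqrtd.norm_mul]
  · refine absurd (one_sub_four_I_dvd_of_dvd_sq_sub (z := I * ω * l ^ 2) ?_) hcy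
    exact ⟨ω ^ 2 * (1 - 4 * I) * k ^ 4 - (2 * I - 1) * (k * l) ^ 2, by
      grind [I_sq, pow_four_eq_one_of_isUnit hω]⟩

theorem OnIsogenous.exists_add_eq {z k h : ℤ[i]} (hz : OnIsogenous z k h) (hh : IsOdd h)
    (hkh : IsCoprime k h) (hcz : ¬ 1 - 4 * I ∣ z) :
    ∃ d d' u v f g, IsSplit (1 - 4 * I) 2 d d' f g ∧ u * v = 1 ∧ h = f * g ∧ IsCoprime f g ∧
      4 * k ^ 2 - (14 + 12 * I) * h ^ 2 = u * (d * f ^ 4) + (1 + 4 * I) * (v * (d' * g ^ 4)) := by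
  set A := 2 * k ^ 2 - (7 + 6 * I) * h ^ 2 - 2 * z with hA
  set B := 2 * k ^ 2 - (7 + 6 * I) * h ^ 2 + 2 * z with hB
  have hadd : A + B = 4 * k ^ 2 - (14 + 12 * I) * h ^ 2 := by rw [hA, hB]; ring
  rw [OnIsogenous] at hz
  have hmul : A * B = (1 + 4 * I) * ((1 - 4 * I) ^ 2 * h ^ 4) := by grind [I_sq]
  have hck : ¬ 1 - 4 * I ∣ k := fun ⟨t, ht⟩ ↦ hcz <| prime_one_sub_four_I.dvd_of_dvd_pow (n := 2) <|
    ⟨t * k ^ 3 - (2 * I - 1) * k ^ 2 * h ^ 2 - (1 + 2 * I) * (1 - 4 * I) * h ^ 4, by grind [I_sq]⟩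
  have hcs : ¬ 1 - 4 * I ∣ A + B := by
    rw [hadd, show 14 + 12 * I = (1 - 4 * I) * (4 * I - 2) by decide, mul_assoc,
      dvd_sub_left (dvd_mul_right _ _), show (4 : ℤ[i]) = 2 ^ 2 by decide, ← mul_pow]
    intro hc
    have hc2 := prime_one_sub_four_I.dvd_of_dvd_pow hc
    exact hck (isOdd_one_sub_four_I.isCoprime_two.dvd_of_dvd_mul_left hc2)
  have hhs : IsCoprime h (A + B) := by
    rw [hadd, show 4 * k ^ 2 - (14 + 12 * I) * h ^ 2
      = 2 * (2 * k ^ 2) + h * (-(14 + 12 * I) * h) by ring]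
    have hh2 := hh.isCoprime_two
    exact (hh2.mul_right (hh2.mul_right hkh.symm.pow_right)).add_mul_left_right _
  obtain ⟨d, d', u, v, f, g, hd, huv, hfg, hco, hab⟩ :=
    exists_fourth_powers_of_mul_eq_prime_mul (isCoprime_of_mul_eq_prime_mul prime_one_add_four_I
      (mul_ne_zero (by decide) (pow_ne_zero 4 hh.ne_zero)) hmul
      (isCoprime_one_sub_four_I_sq_mul_pow_four hcs hhs)) prime_one_sub_four_I
      prime_one_add_four_I two_ne_zero hh.ne_zero hmul
  refine ⟨d, d', u, v, f, g, hd, huv, hfg, hco, ?_⟩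
  rw [← hadd]
  rcases hab with ⟨ha, hb⟩ | ⟨hb, ha⟩ <;> rw [ha, hb]
  rw [add_comm]

theorem OnIsogenous.exists_onQuartic {z k h : ℤ[i]} (hz : OnIsogenous z k h) (hk : IsOdd k)
    (hh : IsOdd h) (hkh : IsCoprime k h) (hcz : ¬ 1 - 4 * I ∣ z) :
    ∃ κ f g, OnQuartic (2 * κ) g f ∧ IsOdd f ∧ IsOdd g ∧ IsCoprime g f ∧ ¬ 1 - 4 * I ∣ f ∧
      κ.norm = k.norm ∧ h.norm = f.norm * g.norm := by
  obtain ⟨d, d', u, v, f, g, hd, huv, rfl, hfg, hsum⟩ := hz.exists_add_eq hh hkh hcz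
  obtain ⟨hf, hg⟩ := IsOdd.mul_iff.1 hh
  obtain ⟨ω, hω, rfl, rfl⟩ : ∃ ω, IsUnit ω ∧ u = ω ^ 2 ∧ v = ω ^ 2 := by
    refine exists_sq_eq_of_mul_eq_one huv ?_
    have hre := congrArg Zsqrtd.re hsum
    have him := congrArg Zsqrtd.im hsum
    have hdf := hd.emod_eight hf hg
    have hh2 := hh.sq_emod_eight
    clear hd
    generalize d * f ^ 4 = D at *
    generalize d' * g ^ 4 = D' at *
    rcases units_cases_of_mul_eq_one huv with ⟨rfl, rfl⟩ | ⟨rfl, rfl⟩ | ⟨rfl, rfl⟩ | ⟨rfl, rfl⟩ <;>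
      simp at hre him ⊢ <;> omega
  have hωo := IsOdd.of_isUnit hω
  have hgf : IsCoprime g (ω * f) := (isCoprime_mul_unit_left_right hω _ _).2 hfg.symm
  rcases hd with ⟨rfl, rfl, hcf⟩ | ⟨rfl, rfl, hcg⟩
  · refine ⟨ω * k, ω * f, g, ?_, hωo.mul hf, hg, hgf, by rwa [hω.dvd_mul_left],
      norm_mul_of_isUnit hω k, by rw [norm_mul_of_isUnit hω, Zsqrtd.norm_mul]⟩
    rw [OnQuartic]
    grind [pow_four_eq_one_of_isUnit hω]
  · refine absurd ?_ (not_onTwist_two_mul (hωo.mul hk) hg (hωo.mul hf) hgf hcg)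
    rw [OnTwist]
    grind [pow_four_eq_one_of_isUnit hω]

theorem not_onQuartic_two_mul_of_isUnit {κ f g : ℤ[i]} (hκ : IsUnit κ) (hf : IsUnit f) :
    ¬ OnQuartic (2 * κ) g f := by
  intro h
  obtain ⟨t, ht⟩ : 1 - 4 * I ∣ 4 * κ ^ 2 - 1 := by
    refine ⟨(4 * I - 2) * g ^ 2 * f ^ 2 + 17 * g ^ 4, ?_⟩
    rw [OnQuartic] at h
    grind [I_sq, pow_four_eq_one_of_isUnit hf]
  have hre := congrArg Zsqrtd.re ht
  have him := congrArg Zsqrtd.im ht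
  rcases isUnit_cases hκ with rfl | rfl | rfl | rfl <;> simp [I_sq] at hre him <;> omega

theorem not_onQuartic_of_isCoprime {w x y : ℤ[i]} (hx : IsOdd x) (hy : IsOdd y)
    (hcy : ¬ 1 - 4 * I ∣ y) (hxy : IsCoprime x y) : ¬ OnQuartic w x y := by
  intro h
  obtain ⟨k, l, z, hz, hk, hl, -, hkl, hcz, hxkl⟩ := h.exists_onIsogenous hx hy hcy hxy
  obtain ⟨κ, f, g, hκ, hf, hg, hgf, hcf, hκk, hfg⟩ := hz.exists_onQuartic hk hl hkl hcz
  by_cases hu : IsUnit (κ * f)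
  · obtain ⟨hκu, hfu⟩ := IsUnit.mul_iff.1 hu
    exact not_onQuartic_two_mul_of_isUnit hκu hfu hκ
  · have hnorm : x.norm.natAbs = (κ * f).norm.natAbs * g.norm.natAbs := by
      rw [hxkl, hfg, ← hκk, Zsqrtd.norm_mul, ← mul_assoc, Int.natAbs_mul]
    have hx0 : x.norm.natAbs ≠ 0 := by simpa [GaussianInt.norm_eq_zero] using hx.ne_zero
    have : g.norm.natAbs < x.norm.natAbs := by
      rw [← Zsqrtd.norm_eq_one_iff] at hu
      rw [hnorm] at hx0 ⊢
      have := left_ne_zero_of_mul hx0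
      exact lt_mul_of_one_lt_left (Nat.pos_of_ne_zero (right_ne_zero_of_mul hx0)) (by omega)
    exact not_onQuartic_of_isCoprime hg hf hcf hgf hκ
termination_by x.norm.natAbs

theorem OnQuartic.exists_of_mul {w x y d : ℤ[i]} (hd : d ≠ 0) (h : OnQuartic w (d * x) (d * y)) :
    ∃ w', w = d ^ 2 * w' ∧ OnQuartic w' x y := by
  rw [OnQuartic] at h
  obtain ⟨w', rfl⟩ : d ^ 2 ∣ w := by
    rw [← IsIntegrallyClosed.pow_dvd_pow_iff two_ne_zero, h]
    exact ⟨y ^ 4 + (14 + 12 * I) * x ^ 2 * y ^ 2 + (1 + 4 * I) * (1 - 4 * I) ^ 2 * x ^ 4, by ring⟩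
  refine ⟨w', rfl, mul_left_cancel₀ (pow_ne_zero 4 hd) ?_⟩
  linear_combination h

theorem not_onQuartic_of_isOdd {w x y : ℤ[i]} (hx : IsOdd x) (hy : IsOdd y)
    (hcy : ¬ 1 - 4 * I ∣ y) : ¬ OnQuartic w x y := by
  intro h
  obtain ⟨d, x', y', hd, rfl, rfl, hxy⟩ := exists_isCoprime_factors (x := x) hy.ne_zero
  obtain ⟨w', -, h'⟩ := h.exists_of_mul hd
  exact not_onQuartic_of_isCoprime (IsOdd.mul_iff.1 hx).2 (IsOdd.mul_iff.1 hy).2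
    (fun hc ↦ hcy (hc.mul_left d)) hxy h'

theorem OnTwist.onQuartic {w x y : ℤ[i]} (h : OnTwist w x y) :
    OnQuartic (((1 - 4 * I) ^ 2 * y ^ 2 + (1 + 4 * I) * x ^ 2) *
        ((2 + 2 * I) * w + (14 + 12 * I) * x * y) + 2 * (17 - 68 * I) * x * y * (x ^ 2 + y ^ 2))
      ((2 + 2 * I) * x * y + w) ((1 - 4 * I) ^ 2 * y ^ 2 - (1 + 4 * I) * x ^ 2) := by
  rw [OnTwist] at h
  rw [OnQuartic]
  grind [I_sq]

theorem not_onTwist_of_not_isOdd {w x y : ℤ[i]} (hx : ¬ IsOdd x) (hy : IsOdd y)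
    (hcx : ¬ 1 - 4 * I ∣ x) : ¬ OnTwist w x y := by
  intro h
  obtain ⟨t, rfl⟩ := not_isOdd_iff.1 hx
  have hco : IsOdd ((1 - 4 * I) ^ 2) := by simp [IsOdd, pow_two]
  have hw : IsOdd (w * w) := by
    rw [← pow_two, h, add_comm]
    exact (hco.mul (hy.pow 4)).add_of_dvd ⟨(1 + 4 * I) * (1 + I) ^ 3 * t ^ 4 +
      (14 + 12 * I) * (1 + I) * t ^ 2 * y ^ 2, by ring⟩
  refine not_onQuartic_of_isOdd ?_ ?_ ?_ h.onQuartic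
  · rw [add_comm]
    exact (IsOdd.mul_iff.1 hw).1.add_of_dvd ⟨(2 + 2 * I) * t * y, by ring⟩
  · rw [sub_eq_add_neg]
    exact (hco.mul (hy.pow 2)).add_of_dvd ⟨-(1 + 4 * I) * (1 + I) * t ^ 2, by ring⟩
  · rw [pow_two (1 - 4 * I), mul_assoc, dvd_sub_right (dvd_mul_right _ _)]
    intro hc
    refine (prime_one_sub_four_I.dvd_or_dvd hc).elim (fun ⟨s, hs⟩ ↦ ?_)
      fun hc ↦ hcx (prime_one_sub_four_I.dvd_of_dvd_pow hc)
    simp [Zsqrtd.ext_iff] at hs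
    omega

/-! ### Points with even `x` -/

/-- `x = (1 + i) 2ʲ x'` with `x'` odd and `x' ≡ i y (mod 2)`. This is the 2-adic information which
the descent yields about points of `OnQuartic` with even `x`. -/
def TwistedOddPart (x y : ℤ[i]) : Prop :=
  ∃ (j : ℕ) (x' : ℤ[i]), x = (1 + I) * 2 ^ j * x' ∧ IsOdd x' ∧ 2 ∣ x' - I * y

theorem TwistedOddPart.mul_left {x y d : ℤ[i]} (hd : IsOdd d) (h : TwistedOddPart x y) :
    TwistedOddPart (d * x) (d * y) := by
  obtain ⟨j, x', rfl, hx', t, ht⟩ := h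
  exact ⟨j, d * x', by ring, hd.mul hx', d * t, by linear_combination d * ht⟩

theorem TwistedOddPart.of_isUnit_mul {x y u : ℤ[i]} (hu : IsUnit u)
    (h : TwistedOddPart (u * x) (u * y)) : TwistedOddPart x y := by
  have h' := h.mul_left ((IsOdd.of_isUnit hu).pow 3)
  have hu4 := pow_four_eq_one_of_isUnit hu
  rwa [show u ^ 3 * (u * x) = x by linear_combination x * hu4,
    show u ^ 3 * (u * y) = y by linear_combination y * hu4] at h'

theorem two_dvd_sub_one_of_sq_eq {w y r : ℤ[i]} (hy : IsOdd y) (h : w ^ 2 = y ^ 4 + 4 * r) :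
    2 ∣ w - 1 := by
  have hw : IsOdd (w * w) := by
    rw [← pow_two, h]
    exact (hy.pow 4).add_of_dvd ⟨(2 - 2 * I) * r, by grind [I_sq]⟩
  have hre := congrArg Zsqrtd.re h
  have hw2 := (IsOdd.mul_iff.1 hw).1.sq_re_emod_four
  have hwo := (IsOdd.mul_iff.1 hw).1
  have hy4 := hy.pow_four_emod_eight
  simp only [IsOdd] at hwo
  generalize y ^ 4 = y4 at *
  refine ⟨⟨(w.re - 1) / 2, w.im / 2⟩, ?_⟩
  simp at hre
  simp [Zsqrtd.ext_iff]
  omega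

theorem TwistedOddPart.two_mul_mul {ε f g y : ℤ[i]} (hε : 2 ∣ ε - 1) (hy : 2 ∣ y - 1) (hf : IsOdd f)
    (h : TwistedOddPart ((1 + I) * g) f) : TwistedOddPart ((1 + I) * (2 * (ε * f * g))) y := by
  obtain ⟨j, g', hg, hg', t, ht⟩ := h
  obtain ⟨a, ha⟩ := hε
  obtain ⟨b, hb⟩ := hy
  obtain ⟨c, hc⟩ := hf.exists_sq_eq
  have hεo : IsOdd ε := by
    rw [show ε = 1 + (1 + I) * ((1 - I) * a) by grind [I_sq]]
    exact (IsOdd.of_isUnit isUnit_one).add_of_dvd (dvd_mul_right _ _)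
  refine ⟨j + 1, ε * f * g', by linear_combination 2 * ε * f * hg, (hεo.mul hf).mul hg',
    a * f * g' + f * t + I * c - I * b, ?_⟩
  linear_combination f * g' * ha + f * ht + I * hc - I * hb

theorem exists_isOdd_add_four_mul {a b q m : ℤ[i]} (hq : Prime q) (hm : m ≠ 0)
    (hodd : IsOdd (a + b)) (h : a * b = 4 * (q * m)) (hco : IsCoprime m (a + b)) :
    ∃ κ μ, IsOdd κ ∧ IsCoprime κ μ ∧ κ * μ = q * m ∧ κ + 4 * μ = a + b := by
  wlog ha : IsOdd a generalizing a b
  · have hb : IsOdd b := by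
      simp [IsOdd] at hodd ha ⊢
      omega
    rw [add_comm a b] at *
    exact this hodd (mul_comm a b ▸ h) hco hb
  have hab : IsCoprime a b := by
    refine isCoprime_of_mul_eq_prime_mul hq (mul_ne_zero (show (4 : ℤ[i]) ≠ 0 by decide) hm)
      (by rw [h]; ring) (IsCoprime.mul_left ?_ hco)
    rw [show (4 : ℤ[i]) = 2 ^ 2 by decide]
    exact hodd.isCoprime_two.symm.pow_left
  obtain ⟨μ, rfl⟩ : 4 ∣ b := by
    refine IsCoprime.dvd_of_dvd_mul_left ?_ (Dvd.intro _ h.symm)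
    rw [show (4 : ℤ[i]) = 2 ^ 2 by decide]
    exact ha.isCoprime_two.symm.pow_left
  refine ⟨a, μ, ha, hab.of_mul_right_right, ?_, rfl⟩
  exact mul_left_cancel₀ (show (4 : ℤ[i]) ≠ 0 by decide) (by rw [← h]; ring)

theorem exists_add_eq_of_isOdd_add {a b q y : ℤ[i]} (hq : Prime q) (hy : y ≠ 0)
    (hodd : IsOdd (a + b)) (h : a * b = 4 * (q * ((1 - 4 * I) ^ 2 * y ^ 4)))
    (hc : ¬ 1 - 4 * I ∣ a + b) (hco : IsCoprime y (a + b)) :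
    ∃ d d' u v k l, IsSplit (1 - 4 * I) 2 d d' k l ∧ u * v = 1 ∧ y = k * l ∧
      IsCoprime k l ∧
      ((IsOdd k ∧ a + b = u * (d * k ^ 4) + 4 * (q * (v * (d' * l ^ 4)))) ∨
        (IsOdd l ∧ a + b = 4 * (u * (d * k ^ 4)) + q * (v * (d' * l ^ 4)))) := by
  obtain ⟨κ, μ, hκ, hκμ, hmul, hadd⟩ := exists_isOdd_add_four_mul hq
    (mul_ne_zero (by decide) (pow_ne_zero 4 hy)) hodd h
    (isCoprime_one_sub_four_I_sq_mul_pow_four hc hco)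
  obtain ⟨d, d', u, v, k, l, hd, huv, rfl, hkl, hab⟩ := exists_fourth_powers_of_mul_eq_prime_mul
    hκμ prime_one_sub_four_I hq two_ne_zero hy hmul
  refine ⟨d, d', u, v, k, l, hd, huv, rfl, hkl, ?_⟩
  rw [← hadd]
  rcases hab with ⟨rfl, rfl⟩ | ⟨rfl, rfl⟩
  · exact .inl ⟨hκ.of_dvd ⟨u * d * k ^ 3, by ring⟩, rfl⟩
  · exact .inr ⟨hκ.of_dvd ⟨q * v * d' * l ^ 3, by ring⟩, by ring⟩

theorem im_eq_zero_of_sq_eq {u v x s r : ℤ[i]} (huv : u * v = 1) (hx : x.re % 8 = 1 ∧ x.im % 8 = 0)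
    (hs : IsOdd s) (h : s ^ 2 = u * x + 2 * r) : u.im = 0 := by
  have him := congrArg Zsqrtd.im h
  have hs2 := hs.sq_emod_eight
  rcases units_cases_of_mul_eq_one huv with ⟨rfl, rfl⟩ | ⟨rfl, rfl⟩ | ⟨rfl, rfl⟩ | ⟨rfl, rfl⟩ <;>
    simp at him ⊢ <;> omega

theorem OnQuartic.exists_add_eq_of_one_add_I_mul {w x y : ℤ[i]} (h : OnQuartic w ((1 + I) * x) y)
    (hx : x ≠ 0) (hy : IsOdd y) (hcy : ¬ 1 - 4 * I ∣ y) (hxy : IsCoprime x y) :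
    ∃ d d' u v k l, IsSplit (1 - 4 * I) 2 d d' k l ∧ u * v = 1 ∧ x = k * l ∧
      IsCoprime k l ∧
      ((IsOdd k ∧ y ^ 2 - (12 - 14 * I) * x ^ 2
          = u * (d * k ^ 4) + 4 * ((1 + 2 * I) * (v * (d' * l ^ 4)))) ∨
        (IsOdd l ∧ y ^ 2 - (12 - 14 * I) * x ^ 2
          = 4 * (u * (d * k ^ 4)) + (1 + 2 * I) * (v * (d' * l ^ 4)))) := by
  rw [OnQuartic] at h
  obtain ⟨t, ht⟩ : 2 ∣ w - 1 := two_dvd_sub_one_of_sq_eq hy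
    (r := (-6 + 7 * I) * x ^ 2 * y ^ 2 - (17 - 68 * I) * x ^ 4) (by rw [h]; grind [I_sq])
  obtain ⟨s, hs⟩ := hy.exists_sq_eq
  obtain ⟨κ, hκ⟩ : ∃ κ, 2 * κ = y ^ 2 - (12 - 14 * I) * x ^ 2 + w :=
    ⟨1 + s + t - (6 - 7 * I) * x ^ 2, by rw [hs]; linear_combination -ht⟩
  have hadd : κ + (κ - w) = y ^ 2 - (12 - 14 * I) * x ^ 2 := by
    rw [← add_sub_assoc, ← two_mul, hκ]; ring
  rw [← hadd]
  refine exists_add_eq_of_isOdd_add prime_one_add_two_I hx ?_ ?_ ?_ ?_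
  · rw [hadd, sub_eq_add_neg]
    exact (hy.pow 2).add_of_dvd ⟨(1 + 13 * I) * x ^ 2, by grind [I_sq]⟩
  · refine mul_left_cancel₀ (show (4 : ℤ[i]) ≠ 0 by decide) ?_
    grind [I_sq]
  · rw [hadd, show 12 - 14 * I = (1 - 4 * I) * (4 + 2 * I) by decide, mul_assoc,
      dvd_sub_left (dvd_mul_right _ _)]
    exact fun hc ↦ hcy (prime_one_sub_four_I.dvd_of_dvd_pow hc)
  · rw [hadd, sub_eq_add_neg, pow_two x, ← neg_mul, mul_left_comm]
    exact hxy.pow_right.add_mul_left_right _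

theorem IsOdd.two_dvd_sub_I_mul {x y : ℤ[i]} (hx : IsOdd x) (hy : IsOdd y)
    (h : ((x ^ 2).re - (y ^ 2).re) % 4 = 2) : 2 ∣ x - I * y := by
  have hx2 := hx.sq_re_emod_four
  have hy2 := hy.sq_re_emod_four
  simp only [IsOdd] at hx hy
  refine ⟨⟨(x.re + y.im) / 2, (x.im - y.re) / 2⟩, ?_⟩
  simp [Zsqrtd.ext_iff]
  omega

theorem twistedOddPart_of_isOdd_right {x y d d' u v k l : ℤ[i]} (hy : IsOdd y) (hl : IsOdd l)
    (hd : d = 1 ∨ d = (1 - 4 * I) ^ 2) (hd' : d' = 1 ∨ d' = (1 - 4 * I) ^ 2) (huv : u * v = 1)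
    (hx : x = k * l)
    (h : y ^ 2 - (12 - 14 * I) * x ^ 2
      = 4 * (u * (d * k ^ 4)) + (1 + 2 * I) * (v * (d' * l ^ 4))) :
    TwistedOddPart ((1 + I) * x) y := by
  have hl4 := hl.mul_pow_four_emod_eight hd'
  have hy2 := hy.sq_emod_eight
  by_cases hk : IsOdd k
  · have hxo : IsOdd x := hx ▸ hk.mul hl
    refine ⟨0, x, by ring, hxo, hxo.two_dvd_sub_I_mul hy ?_⟩
    have hk4 := hk.mul_pow_four_emod_eight hd
    have hx2 := hxo.sq_emod_eight
    have hre := congrArg Zsqrtd.re h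
    have him := congrArg Zsqrtd.im h
    clear h hx hd hd'
    generalize d * k ^ 4 = D at *
    generalize d' * l ^ 4 = D' at *
    rcases units_cases_of_mul_eq_one huv with ⟨rfl, rfl⟩ | ⟨rfl, rfl⟩ | ⟨rfl, rfl⟩ | ⟨rfl, rfl⟩ <;>
      simp at hre him <;> omega
  · obtain ⟨t, rfl⟩ := not_isOdd_iff.1 hk
    have him : y ^ 2 = (1 + 2 * I) * (v * (d' * l ^ 4)) +
        4 * (u * (d * ((1 + I) * t) ^ 4) + (7 + 6 * I) * (t * l) ^ 2) := by
      grind [I_sq]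
    replace him := congrArg Zsqrtd.im him
    exfalso
    clear h hx hd hd'
    generalize d' * l ^ 4 = D' at *
    generalize u * (d * ((1 + I) * t) ^ 4) + (7 + 6 * I) * (t * l) ^ 2 = r at *
    rcases units_cases_of_mul_eq_one huv with ⟨rfl, rfl⟩ | ⟨rfl, rfl⟩ | ⟨rfl, rfl⟩ | ⟨rfl, rfl⟩ <;>
      simp at him <;> omega

theorem OnQuartic.twistedOddPart_or_exists_onIsogenous {w x y : ℤ[i]}
    (h : OnQuartic w ((1 + I) * x) y) (hx : x ≠ 0) (hy : IsOdd y) (hcy : ¬ 1 - 4 * I ∣ y)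
    (hxy : IsCoprime x y) :
    TwistedOddPart ((1 + I) * x) y ∨ ∃ ω k l, IsUnit ω ∧ ω * x = k * l ∧ IsOdd k ∧ IsCoprime k l ∧
      OnIsogenous (ω * y) k ((1 + I) * l) := by
  obtain ⟨d, d', u, v, k, l, hd, huv, rfl, hkl, ⟨hk, hsum⟩ | ⟨hl, hsum⟩⟩ :=
    h.exists_add_eq_of_one_add_I_mul hx hy hcy hxy
  · right
    obtain ⟨ω, hω, rfl, rfl⟩ := exists_sq_eq_of_mul_eq_one huv <| im_eq_zero_of_sq_eq huv
      (hk.mul_pow_four_emod_eight hd.left) hy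
      (r := (6 - 7 * I) * (k * l) ^ 2 + 2 * ((1 + 2 * I) * (v * (d' * l ^ 4))))
      (by linear_combination hsum)
    rcases hd with ⟨rfl, rfl, -⟩ | ⟨rfl, rfl, -⟩
    · refine ⟨ω, ω * k, l, hω, by ring, (IsOdd.of_isUnit hω).mul hk,
        (isCoprime_mul_unit_left_left hω _ _).2 hkl, ?_⟩
      rw [OnIsogenous]
      grind [I_sq, pow_four_eq_one_of_isUnit hω]
    · refine absurd (one_sub_four_I_dvd_of_dvd_sq_sub (z := 2 * ω * l ^ 2) ?_) hcy
      exact ⟨ω ^ 2 * (1 - 4 * I) * k ^ 4 + (4 + 2 * I) * (k * l) ^ 2, by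
        grind [I_sq, pow_four_eq_one_of_isUnit hω]⟩
  · exact .inl (twistedOddPart_of_isOdd_right hy hl hd.left hd.right huv rfl hsum)

theorem OnIsogenous.two_dvd {z k h : ℤ[i]} (hz : OnIsogenous z k ((1 + I) * h)) (hzo : IsOdd z)
    (hk : IsOdd k) : 2 ∣ h := by
  rw [OnIsogenous] at hz
  have hz2 := hzo.sq_emod_eight
  have hk4 := hk.pow_four_emod_eight
  have hh : ¬ IsOdd h := fun hh ↦ by
    have him : z ^ 2 = k ^ 4 + (12 - 14 * I) * (k * h) ^ 2
        + 4 * ((1 + 2 * I) * (1 - 4 * I) ^ 2 * h ^ 4) := by grind [I_sq]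
    replace him := congrArg Zsqrtd.im him
    have hkh := (hk.mul hh).sq_emod_eight
    generalize (1 + 2 * I) * (1 - 4 * I) ^ 2 * h ^ 4 = r at *
    generalize (k * h) ^ 2 = kh at *
    simp at him
    omega
  obtain ⟨h₁, rfl⟩ := not_isOdd_iff.1 hh
  have hh₁ : ¬ IsOdd h₁ := fun hh₁ ↦ by
    have h' : z ^ 2 = k ^ 4 + 4 * ((7 + 6 * I) * (k * h₁) ^ 2)
        - 16 * ((1 + 2 * I) * (1 - 4 * I) ^ 2 * h₁ ^ 4) := by grind [I_sq]
    have hre := congrArg Zsqrtd.re h'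
    have him := congrArg Zsqrtd.im h'
    have hkh := (hk.mul hh₁).sq_emod_eight
    generalize (1 + 2 * I) * (1 - 4 * I) ^ 2 * h₁ ^ 4 = r at *
    generalize (k * h₁) ^ 2 = kh at *
    simp at hre him
    omega
  obtain ⟨h₂, rfl⟩ := not_isOdd_iff.1 hh₁
  exact ⟨I * h₂, by grind [I_sq]⟩

theorem OnIsogenous.exists_add_eq_of_two_mul {z k h : ℤ[i]}
    (hz : OnIsogenous z k ((1 + I) * (2 * h))) (hk : IsOdd k) (hh : h ≠ 0)
    (hkh : IsCoprime k h) (hcz : ¬ 1 - 4 * I ∣ z) :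
    ∃ d d' u v f g, IsSplit (1 - 4 * I) 2 d d' f g ∧ u * v = 1 ∧ h = f * g ∧
      IsCoprime f g ∧
      ((IsOdd f ∧ k ^ 2 + (24 - 28 * I) * h ^ 2
          = u * (d * f ^ 4) + 4 * (-(1 + 4 * I) * (v * (d' * g ^ 4)))) ∨
        (IsOdd g ∧ k ^ 2 + (24 - 28 * I) * h ^ 2
          = 4 * (u * (d * f ^ 4)) + -(1 + 4 * I) * (v * (d' * g ^ 4)))) := by
  rw [OnIsogenous] at hz
  obtain ⟨t, ht⟩ : 2 ∣ z - 1 := two_dvd_sub_one_of_sq_eq hk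
    (r := (12 - 14 * I) * k ^ 2 * h ^ 2 + 16 * (1 + 2 * I) * (1 - 4 * I) ^ 2 * h ^ 4)
    (by rw [hz]; grind [I_sq])
  obtain ⟨s, hs⟩ := hk.exists_sq_eq
  obtain ⟨a, ha⟩ : ∃ a, 2 * a = z + k ^ 2 + (24 - 28 * I) * h ^ 2 :=
    ⟨1 + s + t + (12 - 14 * I) * h ^ 2, by rw [hs]; linear_combination -ht⟩
  have hadd : a + (a - z) = k ^ 2 + (24 - 28 * I) * h ^ 2 := by linear_combination ha
  rw [← hadd]
  refine exists_add_eq_of_isOdd_add prime_one_add_four_I.neg hh ?_ ?_ ?_ ?_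
  · rw [hadd]
    exact (hk.pow 2).add_of_dvd ⟨(-2 - 26 * I) * h ^ 2, by grind [I_sq]⟩
  · refine mul_left_cancel₀ (show (4 : ℤ[i]) ≠ 0 by decide) ?_
    grind [I_sq]
  · rw [hadd, show 24 - 28 * I = (1 - 4 * I) * (8 + 4 * I) by decide, mul_assoc,
      dvd_add_left (dvd_mul_right _ _)]
    refine fun hc ↦ hcz (prime_one_sub_four_I.dvd_of_dvd_pow (n := 2) ?_)
    obtain ⟨r, hr⟩ := prime_one_sub_four_I.dvd_of_dvd_pow hc
    clear ht hs ha hadd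
    exact ⟨r * k ^ 3 + (16 + 8 * I) * (k * h) ^ 2 + 64 * (1 + 2 * I) * (1 - 4 * I) * h ^ 4,
      by grind [I_sq]⟩
  · rw [hadd, pow_two h, mul_left_comm]
    exact hkh.symm.pow_right.add_mul_left_right _

theorem sq_add_ne_of_isOdd_right {k d d' u v f g : ℤ[i]} (hk : IsOdd k) (hg : IsOdd g)
    (hd : d = 1 ∨ d = (1 - 4 * I) ^ 2) (hd' : d' = 1 ∨ d' = (1 - 4 * I) ^ 2) (huv : u * v = 1) :
    k ^ 2 + (24 - 28 * I) * (f * g) ^ 2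
      ≠ 4 * (u * (d * f ^ 4)) + -(1 + 4 * I) * (v * (d' * g ^ 4)) := by
  intro h
  have hg4 := hg.mul_pow_four_emod_eight hd'
  have hk2 := hk.sq_emod_eight
  generalize d' * g ^ 4 = D' at *
  by_cases hf : IsOdd f
  · have hf4 := hf.mul_pow_four_emod_eight hd
    have hfg := (hf.mul hg).sq_emod_eight
    have hre := congrArg Zsqrtd.re h
    have him := congrArg Zsqrtd.im h
    generalize (f * g) ^ 2 = fg at *
    generalize d * f ^ 4 = D at *
    rcases units_cases_of_mul_eq_one huv with ⟨rfl, rfl⟩ | ⟨rfl, rfl⟩ | ⟨rfl, rfl⟩ | ⟨rfl, rfl⟩ <;>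
      simp at hre him <;> omega
  · obtain ⟨t, rfl⟩ := not_isOdd_iff.1 hf
    have h' : k ^ 2 = -(1 + 4 * I) * (v * D')
        + 8 * (-2 * u * d * t ^ 4 - (7 + 6 * I) * (t * g) ^ 2) := by grind [I_sq]
    have hre := congrArg Zsqrtd.re h'
    have him := congrArg Zsqrtd.im h'
    generalize -2 * u * d * t ^ 4 - (7 + 6 * I) * (t * g) ^ 2 = r at *
    rcases units_cases_of_mul_eq_one huv with ⟨rfl, rfl⟩ | ⟨rfl, rfl⟩ | ⟨rfl, rfl⟩ | ⟨rfl, rfl⟩ <;>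
      simp at hre him <;> omega

theorem OnIsogenous.exists_onQuartic_of_two_mul {z k h : ℤ[i]}
    (hz : OnIsogenous z k ((1 + I) * (2 * h))) (hk : IsOdd k) (hh : h ≠ 0)
    (hkh : IsCoprime k h) (hcz : ¬ 1 - 4 * I ∣ z) :
    ∃ ε f g w, OnQuartic w ((1 + I) * g) f ∧ k * h = ε * f * g ∧ 2 ∣ ε - 1 ∧ IsOdd f ∧
      IsCoprime g f := by
  obtain ⟨d, d', u, v, f, g, hd, huv, rfl, hfg, ⟨hf, hsum⟩ | ⟨hg, hsum⟩⟩ :=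
    hz.exists_add_eq_of_two_mul hk hh hkh hcz
  · obtain ⟨ω, hω, rfl, rfl⟩ := exists_sq_eq_of_mul_eq_one huv <| im_eq_zero_of_sq_eq huv
      (hf.mul_pow_four_emod_eight hd.left) hk
      (r := -(12 - 14 * I) * (f * g) ^ 2 - 2 * ((1 + 4 * I) * (v * (d' * g ^ 4))))
      (by linear_combination hsum)
    have hω4 := pow_four_eq_one_of_isUnit hω
    have hωf := (IsOdd.of_isUnit hω).mul hf
    rcases hd with ⟨rfl, rfl, -⟩ | ⟨rfl, rfl, hcg⟩
    · have hE : OnQuartic (ω * k) ((1 + I) * g) (ω * f) := by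
        rw [OnQuartic]
        grind [I_sq]
      refine ⟨ω ^ 3 * k, ω * f, g, ω * k, hE, by grind, ?_, hωf,
        (isCoprime_mul_unit_left_right hω _ _).2 hfg.symm⟩
      refine two_dvd_sub_one_of_sq_eq hωf (r := -(6 - 7 * I) * (ω * f * g) ^ 2
        - (1 + 4 * I) * (1 - 4 * I) ^ 2 * g ^ 4) ?_
      rw [OnQuartic] at hE
      rw [show (ω ^ 3 * k) ^ 2 = (ω * k) ^ 2 by linear_combination (ω * k) ^ 2 * hω4, hE]
      clear hE hω4 hsum hz
      grind [I_sq]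
    · refine absurd ?_ (not_onTwist_of_not_isOdd (w := ω * k) (not_isOdd_iff.2 (dvd_mul_right _ g))
        hωf fun hc ↦ hcg (isOdd_one_sub_four_I.isCoprime_one_add_I.dvd_of_dvd_mul_left hc))
      rw [OnTwist]
      grind [I_sq]
  · exact absurd hsum (sq_add_ne_of_isOdd_right hk hg hd.left
      hd.right huv)

theorem OnQuartic.not_one_sub_four_I_dvd {w x y : ℤ[i]} (h : OnQuartic w x y) (hx : ¬ IsOdd x)
    (hy : IsOdd y) (hxy : IsCoprime x y) : ¬ 1 - 4 * I ∣ y := by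
  rintro ⟨y₁, rfl⟩
  have hcx : ¬ 1 - 4 * I ∣ x := fun hcx ↦
    prime_one_sub_four_I.not_isUnit (hxy.isUnit_of_dvd' hcx (dvd_mul_right _ _))
  rw [OnQuartic] at h
  obtain ⟨w₁, rfl⟩ : 1 - 4 * I ∣ w := by
    refine prime_one_sub_four_I.dvd_of_dvd_pow (n := 2) ?_
    rw [h]
    exact ⟨(1 - 4 * I) ^ 3 * y₁ ^ 4 + (14 + 12 * I) * (1 - 4 * I) * x ^ 2 * y₁ ^ 2 +
      (1 + 4 * I) * (1 - 4 * I) * x ^ 4, by ring⟩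
  refine not_onTwist_of_not_isOdd (w := w₁) hx (IsOdd.mul_iff.1 hy).2 hcx
    (mul_left_cancel₀ (pow_ne_zero 2 prime_one_sub_four_I.ne_zero) ?_)
  linear_combination h

theorem OnIsogenous.exists_onQuartic_of_one_add_I_mul {z k l : ℤ[i]}
    (hz : OnIsogenous z k ((1 + I) * l)) (hzo : IsOdd z) (hk : IsOdd k) (hl : l ≠ 0)
    (hkl : IsCoprime k l) (hcz : ¬ 1 - 4 * I ∣ z) :
    2 ∣ z - 1 ∧ ∃ ε f g w, OnQuartic w ((1 + I) * g) f ∧ k * l = 2 * (ε * f * g) ∧ 2 ∣ ε - 1 ∧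
      IsOdd f ∧ IsCoprime g f := by
  obtain ⟨h, rfl⟩ := hz.two_dvd hzo hk
  obtain ⟨ε, f, g, w, hw, hfg, hε, hf, hgf⟩ := hz.exists_onQuartic_of_two_mul hk
    (right_ne_zero_of_mul hl) hkl.of_mul_right_right hcz
  refine ⟨two_dvd_sub_one_of_sq_eq hk (r := (12 - 14 * I) * k ^ 2 * h ^ 2
    + 16 * (1 + 2 * I) * (1 - 4 * I) ^ 2 * h ^ 4) ?_, ε, f, g, w, hw, ?_, hε, hf, hgf⟩
  · rw [OnIsogenous] at hz
    rw [hz]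
    grind [I_sq]
  · rw [← hfg]
    ring

theorem norm_natAbs_lt_of_eq_two_mul {x a g : ℤ[i]} (hx : x ≠ 0) (h : x = 2 * (a * g)) :
    g.norm.natAbs < x.norm.natAbs := by
  have hx0 : x.norm.natAbs ≠ 0 := by simpa [GaussianInt.norm_eq_zero] using hx
  have hnorm : x.norm.natAbs = 4 * a.norm.natAbs * g.norm.natAbs := by
    rw [h, Zsqrtd.norm_mul, Zsqrtd.norm_mul, Int.natAbs_mul, Int.natAbs_mul, ← mul_assoc,
      show (2 : ℤ[i]).norm.natAbs = 4 by decide]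
  rw [hnorm] at hx0 ⊢
  have := left_ne_zero_of_mul hx0
  exact lt_mul_of_one_lt_left (Nat.pos_of_ne_zero (right_ne_zero_of_mul hx0)) (by omega)

theorem OnQuartic.twistedOddPart_of_isCoprime {w x y : ℤ[i]} (h : OnQuartic w ((1 + I) * x) y)
    (hx : x ≠ 0) (hy : IsOdd y) (hxy : IsCoprime x y) : TwistedOddPart ((1 + I) * x) y := by
  have hcy := h.not_one_sub_four_I_dvd (not_isOdd_iff.2 (dvd_mul_right _ x)) hy
    (hy.isCoprime_one_add_I.symm.mul_left hxy)
  rcases h.twistedOddPart_or_exists_onIsogenous hx hy hcy hxy with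
    hxy | ⟨ω, k, l, hω, hkl, hk, hco, hz⟩
  · exact hxy
  have hl : l ≠ 0 := right_ne_zero_of_mul (hkl ▸ mul_ne_zero hω.ne_zero hx)
  obtain ⟨hz1, ε, f, g, w', hw', hfg, hε, hf, hgf⟩ := hz.exists_onQuartic_of_one_add_I_mul
    ((IsOdd.of_isUnit hω).mul hy) hk hl hco (by rwa [hω.dvd_mul_left])
  rw [hkl.symm] at hfg
  have hlt : g.norm.natAbs < x.norm.natAbs := by
    rw [← norm_mul_of_isUnit hω x]
    exact norm_natAbs_lt_of_eq_two_mul (mul_ne_zero hω.ne_zero hx) hfg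
  have hg : g ≠ 0 := by
    rintro rfl
    simp [hω.ne_zero, hx] at hfg
  have := (hw'.twistedOddPart_of_isCoprime hg hf hgf).two_mul_mul hε hz1 hf
  rw [← hfg, mul_left_comm] at this
  exact this.of_isUnit_mul hω
termination_by x.norm.natAbs

theorem OnQuartic.twistedOddPart {w x y : ℤ[i]} (h : OnQuartic w x y) (hx : ¬ IsOdd x)
    (hx0 : x ≠ 0) (hy : IsOdd y) : TwistedOddPart x y := by
  obtain ⟨d, x', y', hd, rfl, rfl, hxy⟩ := exists_isCoprime_factors (x := x) hy.ne_zero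
  obtain ⟨hdo, hy'⟩ := IsOdd.mul_iff.1 hy
  obtain ⟨w', -, h'⟩ := h.exists_of_mul hd
  obtain ⟨x₁, rfl⟩ := not_isOdd_iff.1 fun hx' ↦ hx (hdo.mul hx')
  exact (h'.twistedOddPart_of_isCoprime (right_ne_zero_of_mul (right_ne_zero_of_mul hx0)) hy'
    hxy.of_mul_left_right).mul_left hdo

/-! ### The equation `s² = x⁴ + x²y² - y⁴` -/

theorem exists_eq_pow_of_mul_eq_pow {a b y : ℤ} {n : ℕ} (hn : Even n) (hab : IsCoprime a b)
    (ha : 0 < a) (h : a * b = y ^ n) : ∃ f, a = f ^ n := by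
  obtain ⟨f, hf⟩ := exists_associated_pow_of_associated_pow_mul hab (.of_eq h.symm)
  rcases Int.associated_iff.1 hf with hf | hf
  · exact ⟨f, hf.symm⟩
  · linarith [hn.pow_nonneg f]

theorem exists_add_eq_of_int_mul_eq_prime_mul_pow_four {a b p y : ℤ} (hp : Prime p) (hp0 : 0 < p)
    (hy : y ≠ 0) (h : a * b = p * y ^ 4) (hadd : 0 < a + b) (hco : IsCoprime y (a + b)) :
    ∃ f g, y = f * g ∧ IsCoprime f g ∧ a + b = f ^ 4 + p * g ^ 4 := by
  have hy4 : 0 < y ^ 4 := by positivity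
  have hab : IsCoprime a b := isCoprime_of_mul_eq_prime_mul hp hy4.ne' h hco.pow_left
  obtain ⟨ha, hb⟩ : 0 < a ∧ 0 < b := by
    rcases pos_and_pos_or_neg_and_neg_of_mul_pos (h ▸ mul_pos hp0 hy4) with h | h
    · exact h
    · linarith [h.1, h.2]
  wlog hpb : p ∣ b generalizing a b
  · rw [add_comm] at hadd hco ⊢
    exact this ((mul_comm b a).trans h) hadd hco hab.symm hb ha
      ((hp.dvd_or_dvd ⟨_, h⟩).resolve_right hpb)
  obtain ⟨b', rfl⟩ := hpb
  have hab' := hab.of_mul_right_right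
  have h' : a * b' = y ^ 4 := mul_left_cancel₀ hp.ne_zero (by rw [← h]; ring)
  have hfour : Even 4 := by decide
  obtain ⟨f, rfl⟩ := exists_eq_pow_of_mul_eq_pow hfour hab' ha h'
  obtain ⟨g, rfl⟩ := exists_eq_pow_of_mul_eq_pow hfour hab'.symm (pos_of_mul_pos_right hb hp0.le)
    ((mul_comm _ _).trans h')
  have hfg : IsCoprime f g := (IsCoprime.pow_iff four_pos four_pos).1 hab'
  rw [← mul_pow, pow_eq_pow_iff_cases] at h'
  rcases h' with h' | h' | ⟨h', -⟩
  · cases h'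
  · exact ⟨f, g, h'.symm, hfg, rfl⟩
  · exact ⟨-f, g, by rw [neg_mul, h', neg_neg], hfg.neg_left, by rw [hfour.neg_pow]⟩

theorem exists_of_sq_add_sq_eq_sq {x y z : ℤ} (hxy : IsCoprime x y) (hx : x % 2 = 1)
    (h : x ^ 2 + y ^ 2 = z ^ 2) :
    ∃ m n, x = m ^ 2 - n ^ 2 ∧ y = 2 * m * n ∧ |z| = m ^ 2 + n ^ 2 ∧ IsCoprime m n ∧ 0 ≤ m := by
  have hz : z ≠ 0 := by
    rintro rfl
    have hx0 : 0 < x ^ 2 := by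
      have : x ≠ 0 := by omega
      positivity
    linarith [sq_nonneg y]
  have ht : PythagoreanTriple x y |z| := by
    rw [PythagoreanTriple, abs_mul_abs_self]
    linarith
  obtain ⟨m, n, hx, hy, hz, hmn, -, hm⟩ :=
    ht.coprime_classification' (Int.isCoprime_iff_gcd_eq_one.1 hxy) hx (abs_pos.2 hz)
  exact ⟨m, n, hx, hy, hz, Int.isCoprime_iff_gcd_eq_one.2 hmn, hm⟩

theorem exists_of_sq_sub_sq_add_eq_sq {f g z : ℤ} (hfg : IsCoprime f g)
    (hodd : (f ^ 2 - g ^ 2) % 2 = 1) (hg : g ≠ 0)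
    (h : (f ^ 2 - g ^ 2) ^ 2 + (2 * g ^ 2) ^ 2 = z ^ 2) :
    ∃ a b, f ^ 2 = a ^ 4 + a ^ 2 * b ^ 2 - b ^ 4 ∧ g ^ 2 = (a * b) ^ 2 ∧ IsCoprime a b ∧
      b % 2 = 0 := by
  have hco : IsCoprime (f ^ 2 - g ^ 2) (2 * g ^ 2) := by
    refine (Int.isCoprime_two_right.2 (Int.odd_iff.2 hodd)).mul_right ?_
    rw [sub_eq_add_neg, neg_eq_neg_one_mul]
    exact (hfg.pow (m := 2) (n := 2)).add_mul_right_left _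
  obtain ⟨m, n, hx, hy, -, hmn, hm⟩ := exists_of_sq_add_sq_eq_sq hco hodd h
  have hg2 : m * n = g ^ 2 := by linarith
  have hpos : 0 < m * n := hg2 ▸ by positivity
  have hm' : 0 < m := hm.lt_of_ne (left_ne_zero_of_mul hpos.ne').symm
  obtain ⟨a, rfl⟩ := exists_eq_pow_of_mul_eq_pow even_two hmn hm' hg2
  obtain ⟨b, rfl⟩ := exists_eq_pow_of_mul_eq_pow even_two hmn.symm (pos_of_mul_pos_right hpos hm)
    ((mul_comm _ _).trans hg2)
  have hf : f ^ 2 = a ^ 4 + a ^ 2 * b ^ 2 - b ^ 4 := by linear_combination hx - hg2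
  refine ⟨a, b, hf, by rw [mul_pow, hg2], (IsCoprime.pow_iff two_pos two_pos).1 hmn, ?_⟩
  rcases Int.even_or_odd' f with ⟨k, rfl | rfl⟩ <;>
    rcases Int.even_or_odd' a with ⟨l, rfl | rfl⟩ <;>
    rcases Int.even_or_odd' b with ⟨j, rfl | rfl⟩ <;> ring_nf at hf hodd hx ⊢ <;> omega

theorem exists_of_pow_four_add_sq_eq_sq {g h z : ℤ} (hg : g % 2 = 1) (hgh : IsCoprime g h)
    (hz : (g ^ 2) ^ 2 + h ^ 2 = z ^ 2) :
    ∃ p m, g = p * m ∧ 2 * h = p ^ 4 - m ^ 4 ∧ IsCoprime p m := by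
  have hg2 : g ^ 2 % 2 = 1 := by rw [pow_two, Int.mul_emod, hg]; rfl
  obtain ⟨a, b, hga, rfl, -, hab, ha⟩ := exists_of_sq_add_sq_eq_sq hgh.pow_left hg2 hz
  obtain ⟨c, d, hgc, rfl, hac, hcd, -⟩ := exists_of_sq_add_sq_eq_sq hgh.of_mul_right_right hg
    (by rw [hga, sub_add_cancel] : g ^ 2 + b ^ 2 = a ^ 2)
  rw [abs_of_nonneg ha] at hac
  subst hac
  have hgpm : g = (c + d) * (c - d) := by rw [hgc]; ring
  refine ⟨c + d, c - d, hgpm, by ring, ?_⟩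
  have hodd : (c + d) % 2 = 1 := by
    rw [hgpm, Int.mul_emod] at hg
    rcases Int.emod_two_eq (c + d) with h0 | h0
    · simp [h0] at hg
    · exact h0
  rw [show c - d = 2 * c + (c + d) * -1 by ring]
  refine ((Int.isCoprime_two_right.2 (Int.odd_iff.2 hodd)).mul_right ?_).add_mul_left_right _
  rw [add_comm]
  simpa using hcd.symm.add_mul_left_left 1

theorem exists_add_eq_of_sq_eq_of_even {s x y : ℤ} (hx : x % 2 = 1) (hy : y ≠ 0)
    (hxy : IsCoprime x y) (h : s ^ 2 = x ^ 4 + x ^ 2 * (2 * y) ^ 2 - (2 * y) ^ 4) :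
    ∃ f g, y = f * g ∧ IsCoprime f g ∧ x ^ 2 + 2 * y ^ 2 = f ^ 4 + 5 * g ^ 4 := by
  have hs : (x ^ 2 + 2 * y ^ 2 + s) % 2 = 0 := by
    rcases Int.even_or_odd' x with ⟨k, rfl | rfl⟩ <;>
      rcases Int.even_or_odd' s with ⟨l, rfl | rfl⟩ <;>
      ring_nf at h hx ⊢ <;> omega
  obtain ⟨a, ha⟩ := Int.dvd_of_emod_eq_zero hs
  have hadd : a + (a - s) = x ^ 2 + 2 * y ^ 2 := by linarith
  rw [← hadd]
  refine exists_add_eq_of_int_mul_eq_prime_mul_pow_four (by norm_num) (by norm_num) hy ?_ ?_ ?_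
  · obtain rfl : s = 2 * a - (x ^ 2 + 2 * y ^ 2) := by linarith
    linarith
  · rw [hadd]
    positivity
  · rw [hadd, pow_two y, mul_left_comm]
    exact hxy.symm.pow_right.add_mul_left_right _

theorem eq_zero_of_sq_eq_of_even {s x y : ℤ} (hxy : IsCoprime x y) (hy : y % 2 = 0)
    (h : s ^ 2 = x ^ 4 + x ^ 2 * y ^ 2 - y ^ 4) : y = 0 := by
  by_contra hy0
  obtain ⟨t, rfl⟩ := Int.dvd_of_emod_eq_zero hy
  have hx : x % 2 = 1 := by
    rw [← Int.odd_iff, ← Int.isCoprime_two_right]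
    exact hxy.of_mul_right_left
  obtain ⟨f, g, rfl, hfg, hsum⟩ := exists_add_eq_of_sq_eq_of_even hx (right_ne_zero_of_mul hy0)
    hxy.of_mul_right_right h
  have hodd : (f ^ 2 - g ^ 2) % 2 = 1 := by
    rcases Int.even_or_odd' x with ⟨k, rfl | rfl⟩ <;>
      rcases Int.even_or_odd' f with ⟨l, rfl | rfl⟩ <;>
      rcases Int.even_or_odd' g with ⟨j, rfl | rfl⟩ <;> ring_nf at hsum hx ⊢ <;> omega
  have hg : g ≠ 0 := right_ne_zero_of_mul (right_ne_zero_of_mul hy0)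
  obtain ⟨a, b, hf, hgab, hab, hb⟩ := exists_of_sq_sub_sq_add_eq_sq (z := x) hfg hodd hg
    (by linear_combination -hsum)
  have : b.natAbs < (2 * (f * g)).natAbs := by
    have hf0 : f ≠ 0 := left_ne_zero_of_mul (right_ne_zero_of_mul hy0)
    have hbg : b ∣ g := (Int.pow_dvd_pow_iff two_ne_zero).1
      (hgab ▸ pow_dvd_pow_of_dvd (dvd_mul_left b a) 2)
    calc b.natAbs ≤ g.natAbs := Int.natAbs_le_of_dvd_ne_zero hbg hg
      _ < 2 * (f.natAbs * g.natAbs) := by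
        have := Nat.le_mul_of_pos_left g.natAbs (Int.natAbs_pos.2 hf0)
        have := Int.natAbs_pos.2 hg
        omega
      _ = (2 * (f * g)).natAbs := by rw [Int.natAbs_mul, Int.natAbs_mul]; rfl
  have hb0 : b = 0 := eq_zero_of_sq_eq_of_even hab hb hf
  simp [hb0, hg] at hgab
termination_by y.natAbs

theorem exists_add_eq_of_sq_eq_of_odd {s x y : ℤ} (hxy : IsCoprime x y) (hy : y % 2 = 1)
    (h : s ^ 2 = x ^ 4 + x ^ 2 * y ^ 2 - y ^ 4) :
    ∃ f g, y = f * g ∧ IsCoprime f g ∧ 4 * x ^ 2 + 2 * y ^ 2 = f ^ 4 + 5 * g ^ 4 := by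
  have hadd : (2 * x ^ 2 + y ^ 2 - 2 * s) + (2 * x ^ 2 + y ^ 2 + 2 * s)
    = 4 * x ^ 2 + 2 * y ^ 2 := by ring
  have hy0 : y ≠ 0 := by omega
  rw [← hadd]
  refine exists_add_eq_of_int_mul_eq_prime_mul_pow_four (by norm_num) (by norm_num) hy0 ?_ ?_ ?_
  · linear_combination -4 * h
  · rw [hadd]
    positivity
  · rw [hadd, pow_two y, mul_left_comm, show (4 : ℤ) = 2 ^ 2 by norm_num]
    exact ((Int.isCoprime_two_right.2 (Int.odd_iff.2 hy)).pow_right.mul_right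
      hxy.symm.pow_right).add_mul_left_right _

theorem exists_mul_eq_of_sq_eq_of_odd {s x y : ℤ} (hxy : IsCoprime x y) (hy : y % 2 = 1)
    (h : s ^ 2 = x ^ 4 + x ^ 2 * y ^ 2 - y ^ 4) :
    ∃ f p m, y = f * p * m ∧ IsCoprime p m ∧ f ^ 2 = p ^ 4 + p ^ 2 * m ^ 2 - m ^ 4 ∧
      4 * x ^ 2 = 4 * (p * m) ^ 4 + (p ^ 4 - m ^ 4) ^ 2 := by
  obtain ⟨f, g, rfl, hfg, hsum⟩ := exists_add_eq_of_sq_eq_of_odd hxy hy h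
  obtain ⟨hf, hg⟩ : f % 2 = 1 ∧ g % 2 = 1 := by
    simpa [← Int.odd_iff, Int.odd_mul] using hy
  obtain ⟨k, hk⟩ : 2 ∣ f ^ 2 - g ^ 2 := by
    rw [← even_iff_two_dvd, Int.even_sub, Int.even_pow, Int.even_pow]
    simp [Int.even_iff, hf, hg]
  have hx : (g ^ 2) ^ 2 + k ^ 2 = x ^ 2 := by
    have : (f ^ 2 - g ^ 2) ^ 2 = (2 * k) ^ 2 := by rw [hk]
    linarith
  have hgk : IsCoprime g k := by
    refine IsCoprime.of_mul_right_right (y := 2) ?_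
    rw [← hk, sub_eq_add_neg, pow_two g, ← mul_neg]
    exact hfg.symm.pow_right.add_mul_left_right _
  obtain ⟨p, m, rfl, hkpm, hpm⟩ := exists_of_pow_four_add_sq_eq_sq hg hgk hx
  exact ⟨f, p, m, by ring, hpm, by linear_combination hk + hkpm,
    by rw [← hx, ← hkpm]; ring⟩

theorem sq_eq_one_of_sq_eq_of_odd {s x y : ℤ} (hxy : IsCoprime x y) (hy : y % 2 = 1)
    (h : s ^ 2 = x ^ 4 + x ^ 2 * y ^ 2 - y ^ 4) : x ^ 2 = 1 ∧ y ^ 2 = 1 := by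
  obtain ⟨f, p, m, rfl, hpm, hf, hx⟩ := exists_mul_eq_of_sq_eq_of_odd hxy hy h
  have hm : m % 2 = 1 := by
    rw [← Int.odd_iff, Int.odd_mul, Int.odd_iff, Int.odd_iff] at hy
    exact hy.2
  have hm0 : m ≠ 0 := by omega
  obtain ⟨hp1, hm1⟩ : p ^ 2 = 1 ∧ m ^ 2 = 1 := by
    by_cases hfp : IsUnit (f * p)
    · rw [IsUnit.mul_iff] at hfp
      have hf1 := Int.isUnit_sq hfp.1
      have hp1 := Int.isUnit_sq hfp.2
      have hm2 : m ^ 2 * (m ^ 2 - 1) = 0 := by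
        linear_combination hf - hf1 + (p ^ 2 + 1 + m ^ 2) * hp1
      exact ⟨hp1, by linarith [(mul_eq_zero.1 hm2).resolve_left (pow_ne_zero 2 hm0)]⟩
    · have : m.natAbs < (f * p * m).natAbs := by
        rw [Int.natAbs_mul]
        rw [Int.isUnit_iff_natAbs_eq] at hfp
        have hfp0 : f * p ≠ 0 := fun h0 ↦ by simp [h0] at hy
        have := Int.natAbs_pos.2 hfp0
        exact lt_mul_of_one_lt_left (Int.natAbs_pos.2 hm0) (by omega)
      exact sq_eq_one_of_sq_eq_of_odd hpm hm hf
  have hf1 : f ^ 2 = 1 := by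
    linear_combination hf + (p ^ 2 + 1 + m ^ 2) * hp1 - m ^ 2 * hm1
  have hpm1 : (p * m) ^ 2 = 1 := by rw [mul_pow, hp1, hm1, one_mul]
  have hpm4 : p ^ 4 = m ^ 4 := by linear_combination (p ^ 2 + 1) * hp1 - (m ^ 2 + 1) * hm1
  constructor
  · rw [hpm4, sub_self] at hx
    have hpm4 : (p * m) ^ 4 = 1 := by linear_combination ((p * m) ^ 2 + 1) * hpm1
    linarith
  · rw [mul_assoc, mul_pow, hf1, hpm1, one_mul]
termination_by y.natAbs

theorem pow_four_add_ne_sq_of_even {r s y : ℤ} (hs : s % 2 = 1) (hrs : IsCoprime r s)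
    (hr : r ≠ 0) : (2 * r) ^ 4 + 4 * s ^ 2 * (2 * r - s) ^ 2 ≠ y ^ 2 := by
  intro h
  obtain ⟨z, rfl⟩ : 2 ∣ y := Int.prime_two.dvd_of_dvd_pow (n := 2)
    ⟨8 * r ^ 4 + 2 * s ^ 2 * (2 * r - s) ^ 2, by linarith⟩
  have hodd : ((s - r) ^ 2 - r ^ 2) % 2 = 1 := by
    rw [← Int.odd_iff] at hs ⊢
    rw [show (s - r) ^ 2 - r ^ 2 = s ^ 2 - 2 * (s * r) by ring]
    exact hs.pow.sub_even (even_two_mul _)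
  have hco : IsCoprime (s - r) r := by
    rw [sub_eq_add_neg, neg_eq_neg_one_mul]
    exact hrs.symm.add_mul_right_left _
  obtain ⟨a, b, hf, hrab, hab, hb⟩ := exists_of_sq_sub_sq_add_eq_sq (z := z) hco hodd hr
    (by linarith)
  rw [eq_zero_of_sq_eq_of_even hab hb hf, mul_zero] at hrab
  exact hr (pow_eq_zero_iff two_ne_zero |>.1 (hrab.trans (by norm_num)))

theorem eq_and_sq_eq_one_of_odd {r s y : ℤ} (hr : r % 2 = 1) (hrs : IsCoprime r s)
    (h : r ^ 4 + 4 * s ^ 2 * (r - s) ^ 2 = y ^ 2) (hs : s ≠ 0) : s = r ∧ r ^ 2 = 1 := by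
  have hco : IsCoprime r (2 * s * (r - s)) := by
    refine ((Int.isCoprime_two_right.2 (Int.odd_iff.2 hr)).mul_right hrs).mul_right ?_
    rw [sub_eq_neg_add]
    simpa using hrs.neg_right.add_mul_left_right 1
  obtain ⟨p, m, rfl, hpm4, hpm⟩ := exists_of_pow_four_add_sq_eq_sq hr hco
    (by linarith : (r ^ 2) ^ 2 + (2 * s * (r - s)) ^ 2 = y ^ 2)
  have hp : p % 2 = 1 := by
    rw [← Int.odd_iff, Int.odd_mul, Int.odd_iff, Int.odd_iff] at hr
    exact hr.1
  obtain ⟨hm1, hp1⟩ := sq_eq_one_of_sq_eq_of_odd (s := 2 * s - p * m) hpm.symm hp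
    (by linear_combination -hpm4)
  have h0 : s * (p * m - s) = 0 := by
    have : p ^ 4 = m ^ 4 := by linear_combination (p ^ 2 + 1) * hp1 - (m ^ 2 + 1) * hm1
    linarith
  exact ⟨by linarith [(mul_eq_zero.1 h0).resolve_left hs], by rw [mul_pow, hp1, hm1, one_mul]⟩

theorem pow_four_add_ne_sq {r s x y : ℤ} (hrs : IsCoprime r s) (hr : r ≠ 0) (hs : s ≠ 0)
    (hx : r ^ 2 + 4 * s ^ 2 = x ^ 2) : r ^ 4 + 4 * s ^ 2 * (r - s) ^ 2 ≠ y ^ 2 := by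
  rcases Int.even_or_odd' r with ⟨R, hR | hR⟩
  · subst hR
    exact pow_four_add_ne_sq_of_even
      (Int.odd_iff.1 (Int.isCoprime_two_right.1 hrs.of_mul_left_left.symm))
      hrs.of_mul_left_right (right_ne_zero_of_mul hr)
  · intro hy
    obtain ⟨rfl, hs1⟩ := eq_and_sq_eq_one_of_odd (by omega) hrs hy hs
    have hx5 : x ^ 2 = 5 := by linarith
    have : x < 3 := by nlinarith
    have : -3 < x := by nlinarith
    interval_cases x <;> omega

/-! ### Norm equations over `ℤ[i]` -/

theorem IsOdd.isCoprime_star {a b : ℤ} (hz : IsOdd ⟨a, b⟩) (hab : IsCoprime a b) :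
    IsCoprime (⟨a, b⟩ : ℤ[i]) (star ⟨a, b⟩) := by
  obtain ⟨u, v, huv⟩ := hab
  obtain ⟨α, β, h⟩ := hz.isCoprime_two
  have h2 : (2 : ℤ[i]) = u * (⟨a, b⟩ + star ⟨a, b⟩) - I * v * (⟨a, b⟩ - star ⟨a, b⟩) := by
    simp [Zsqrtd.ext_iff]
    linarith
  exact ⟨α + β * (u - I * v), β * (u + I * v), by linear_combination h - β * h2⟩

theorem exists_eq_isUnit_mul_sq {z y : ℤ[i]} (h : z * star z = y ^ 2)
    (hco : IsCoprime z (star z)) : ∃ β, z = β ^ 2 ∨ z = I * β ^ 2 := by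
  obtain ⟨d, hd⟩ := exists_associated_pow_of_associated_pow_mul hco (.of_eq h.symm)
  obtain ⟨u, hu⟩ := hd
  rcases isUnit_cases u.isUnit with h | h | h | h <;> rw [h] at hu
  · exact ⟨d, .inl (by rw [← hu]; ring)⟩
  · exact ⟨I * d, .inl (by rw [← hu]; grind [I_sq])⟩
  · exact ⟨d, .inr (by rw [← hu]; ring)⟩
  · exact ⟨I * d, .inr (by rw [← hu]; grind [I_sq])⟩

theorem one_add_four_I_dvd {a b : ℤ} (h : 17 ∣ a + 4 * b) : 1 + 4 * I ∣ (⟨a, b⟩ : ℤ[i]) := by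
  obtain ⟨t, ht⟩ := h
  refine ⟨⟨t, b - 4 * t⟩, ?_⟩
  simp [Zsqrtd.ext_iff]
  omega

theorem exists_eq_one_add_four_I_mul_sq {a b y : ℤ} (hab : IsCoprime a b) (ha : a % 2 = 1)
    (hb : b % 2 = 0) (h : a ^ 2 + b ^ 2 = 17 * y ^ 2) (h17 : 17 ∣ a + 4 * b) :
    ∃ β, IsOdd β ∧ (⟨a, b⟩ : ℤ[i]) = (1 + 4 * I) * β ^ 2 := by
  have hodd : IsOdd ⟨a, b⟩ := by simp only [IsOdd]; omega
  have hco := hodd.isCoprime_star hab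
  have hmul : (⟨a, b⟩ : ℤ[i]) * star ⟨a, b⟩ = 17 * y ^ 2 := by
    rw [← Zsqrtd.norm_eq_mul_conj, Zsqrtd.norm_def]
    exact_mod_cast (by linarith : a * a - -1 * b * b = 17 * y ^ 2)
  obtain ⟨z, hz⟩ := one_add_four_I_dvd h17
  rw [hz] at hodd hco hmul
  have hzmul : z * star z = (y : ℤ[i]) ^ 2 := by
    refine mul_left_cancel₀ (show (17 : ℤ[i]) ≠ 0 by decide) ?_
    rw [← hmul, star_mul, show star (1 + 4 * I) = 1 - 4 * I by decide]
    grind [I_sq]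
  rw [star_mul] at hco
  obtain ⟨β, hβ⟩ := exists_eq_isUnit_mul_sq hzmul hco.of_mul_left_right.of_mul_right_left
  have hβodd : IsOdd β := by
    rcases hβ with rfl | rfl
    · exact (IsOdd.mul_iff.1 hodd).2.of_dvd (dvd_pow_self β two_ne_zero)
    · exact (IsOdd.mul_iff.1 hodd).2.of_dvd ((dvd_pow_self β two_ne_zero).mul_left I)
  refine ⟨β, hβodd, ?_⟩
  rcases hβ with rfl | rfl
  · exact hz
  · have hβ2 := hβodd.sq_emod_eight
    have hre := congrArg Zsqrtd.re hz
    generalize β ^ 2 = B at *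
    simp at hre
    omega

theorem sq_emod_eight_of_odd {a : ℤ} (h : a % 2 = 1) : a ^ 2 % 8 = 1 := by
  have := Int.eight_dvd_sq_sub_one_of_odd (Int.odd_iff.2 h)
  omega

theorem IsOdd.emod_eight_of_eq_mul_sq {a b : ℤ} {β : ℤ[i]} (hβ : IsOdd β) (ha : a % 8 = 1)
    (hb : b % 4 = 0) (h : (⟨a, b⟩ : ℤ[i]) = (1 + 4 * I) * β ^ 2) :
    b % 8 = 4 ∧ (β ^ 2).re % 8 = 1 ∧ (β ^ 2).im % 8 = 0 := by
  have hβ2 := hβ.sq_emod_eight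
  have hre := congrArg Zsqrtd.re h
  have him := congrArg Zsqrtd.im h
  generalize β ^ 2 = B at *
  simp at hre him
  omega

theorem IsOdd.emod_four_of_sq_emod_eight {β : ℤ[i]} (hβ : IsOdd β) (hre : (β ^ 2).re % 8 = 1)
    (him : (β ^ 2).im % 8 = 0) : β.re % 2 = 1 ∧ β.im % 4 = 0 := by
  obtain ⟨a, b⟩ := β
  simp only [IsOdd, pow_two, Zsqrtd.re_mul, Zsqrtd.im_mul] at *
  rcases Int.even_or_odd' a with ⟨m, rfl | rfl⟩ <;>
    rcases Int.even_or_odd' b with ⟨n, rfl | rfl⟩ <;>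
    ring_nf at * <;> omega

theorem seventeen_dvd_sub_two_mul {r s : ℤ} (h₁ : 17 ∣ r ^ 2 + 4 * s ^ 2)
    (h₂ : 17 ∣ r ^ 4 + 4 * s ^ 2 * (r - s) ^ 2) : 17 ∣ s - 2 * r := by
  have key : ∀ a b : ZMod 17, a ^ 2 + 4 * b ^ 2 = 0 → a ^ 4 + 4 * b ^ 2 * (a - b) ^ 2 = 0 →
      b - 2 * a = 0 := by decide
  have := key r s (by exact_mod_cast (ZMod.intCast_zmod_eq_zero_iff_dvd _ 17).2 h₁)
    (by exact_mod_cast (ZMod.intCast_zmod_eq_zero_iff_dvd _ 17).2 h₂)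
  exact (ZMod.intCast_zmod_eq_zero_iff_dvd _ 17).1 (by exact_mod_cast this)

theorem pow_four_add_ne_seventeen_mul_sq {l s y : ℤ} (hls : IsCoprime l s) (hs : s % 2 = 1)
    (h17 : 17 ∣ s - 16 * l) : 4 * (4 * l) ^ 4 + s ^ 2 * (s - 8 * l) ^ 2 ≠ 17 * y ^ 2 := by
  intro h
  have hs8 := sq_emod_eight_of_odd hs
  have hsl : IsCoprime (s * (s - 8 * l)) l :=
    hls.symm.mul_left (by simpa [sub_eq_add_neg] using hls.symm.add_mul_right_left (-8))
  have hs2 : s * (s - 8 * l) = s ^ 2 - 8 * (s * l) := by ring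
  have hodd : s * (s - 8 * l) % 2 = 1 := by omega
  have hs32 : IsCoprime (s * (s - 8 * l)) (2 ^ 5) :=
    (Int.isCoprime_two_right.2 (Int.odd_iff.2 hodd)).pow_right
  obtain ⟨β, hβ, hz⟩ := exists_eq_one_add_four_I_mul_sq (b := -(2 ^ 5 * l ^ 2)) (y := y)
    (hs32.mul_right hsl.pow_right).neg_right hodd (by omega) (by linarith)
    (by
      rw [show s * (s - 8 * l) + 4 * -(2 ^ 5 * l ^ 2) = (s - 16 * l) * (s + 8 * l) by ring]
      exact h17.mul_right _)
  have := (hβ.emod_eight_of_eq_mul_sq (by omega) (by omega) hz).1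
  omega

theorem exists_sq_eq_one_add_four_I_mul_sq {r s y : ℤ} (hrs : IsCoprime r s) (hr : r % 2 = 1)
    (h17 : 17 ∣ r - s) (h : r ^ 4 + 16 * s ^ 2 * (r - 2 * s) ^ 2 = 17 * y ^ 2) :
    s % 2 = 1 ∧ ∃ β : ℤ[i], β.re % 2 = 1 ∧ β.im % 4 = 0 ∧
      (⟨r ^ 2, 4 * (s * (2 * s - r))⟩ : ℤ[i]) = (1 + 4 * I) * β ^ 2 := by
  have hr8 := sq_emod_eight_of_odd hr
  have hr2 : IsCoprime r 2 := Int.isCoprime_two_right.2 (Int.odd_iff.2 hr)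
  have hco : IsCoprime r (4 * (s * (2 * s - r))) := by
    refine (hr2.pow_right (n := 2)).mul_right (hrs.mul_right ?_)
    rw [sub_eq_add_neg, neg_eq_neg_one_mul]
    exact (hr2.mul_right hrs).add_mul_right_right _
  obtain ⟨β, hβ, hz⟩ := exists_eq_one_add_four_I_mul_sq (y := y)
    (hco.pow_left (m := 2)) (by omega) (by omega)
    (by linarith) (by
      rw [show r ^ 2 + 4 * (4 * (s * (2 * s - r))) = (r - s) * (r - 15 * s)
        + 17 * (s ^ 2) by ring]
      exact dvd_add (h17.mul_right _) (dvd_mul_right _ _))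
  obtain ⟨him, hβre, hβim⟩ := hβ.emod_eight_of_eq_mul_sq hr8 (by omega) hz
  obtain ⟨hre2, him4⟩ := hβ.emod_four_of_sq_emod_eight hβre hβim
  refine ⟨?_, β, hre2, him4, hz⟩
  have hodd : s * (2 * s - r) % 2 = 1 := by omega
  rw [← Int.odd_iff, Int.odd_mul] at hodd
  exact Int.odd_iff.1 hodd.1

theorem exists_of_sq_add_sixteen_mul_sq_eq {r s x : ℤ} (hrs : IsCoprime r s) (hr : r % 2 = 1)
    (hs : s % 2 = 1)
    (h17 : 17 ∣ r - s) (h : r ^ 2 + 16 * s ^ 2 = 17 * x ^ 2) :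
    ∃ m n l : ℤ, (m ^ 2 - n ^ 2) % 2 = 1 ∧ m * n = 4 * l ∧ r = m ^ 2 - n ^ 2 - 32 * l ∧
      s = m ^ 2 - n ^ 2 + 2 * l := by
  have hr2 : IsCoprime r 2 := Int.isCoprime_two_right.2 (Int.odd_iff.2 hr)
  obtain ⟨⟨m, n⟩, -, hz⟩ := exists_eq_one_add_four_I_mul_sq (b := 4 * s)
    ((hr2.pow_right (n := 2)).mul_right hrs) hr (by omega) (by linarith) (by omega)
  rw [pow_two] at hz
  have hre : r = m ^ 2 - n ^ 2 - 8 * (m * n) := by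
    have := congrArg Zsqrtd.re hz
    simp at this
    linarith
  have him : 4 * s = 4 * (m ^ 2 - n ^ 2) + 2 * (m * n) := by
    have := congrArg Zsqrtd.im hz
    simp at this
    linarith
  exact ⟨m, n, m * n / 4, by omega, by omega, by omega, by omega⟩

theorem onTwist_of_sq_sub_sq_eq {m n l : ℤ} {D β : ℤ[i]} (hl : m * n = 4 * l)
    (hD : D = -(4 + 3 * I) * (m ^ 2 - n ^ 2) + (28 * I - 8) * l)
    (hβ : ((m : ℤ[i]) ^ 2 + n ^ 2) ^ 2 - β ^ 2 = 8 * l * D) :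
    OnTwist (-2 * (1 + I) * β) (m + n * I) (m - n * I) := by
  have hl' : (m : ℤ[i]) * n = 4 * l := by exact_mod_cast hl
  rw [OnTwist, mul_pow, show β ^ 2 = (m ^ 2 + n ^ 2) ^ 2 - 8 * l * D by linear_combination -hβ, hD]
  generalize (m : ℤ[i]) = m at *
  generalize (n : ℤ[i]) = n at *
  generalize (l : ℤ[i]) = l at *
  grind [I_sq]

theorem exists_onQuartic_of_sub_eq_four_mul {m n l : ℤ} {D β τ : ℤ[i]} (hl : m * n = 4 * l)
    (hD : D = -(4 + 3 * I) * (m ^ 2 - n ^ 2) + (28 * I - 8) * l)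
    (hτ : (m : ℤ[i]) ^ 2 + n ^ 2 - β = 4 * τ)
    (hβ : ((m : ℤ[i]) ^ 2 + n ^ 2) ^ 2 - β ^ 2 = 8 * l * D) :
    ∃ w, OnQuartic w (2 * (1 + I) * τ) D := by
  have hl' : (m : ℤ[i]) * n = 4 * l := by exact_mod_cast hl
  have hx : (2 + 2 * I) * (m + n * I) * (m - n * I) + -2 * (1 + I) * β
      = 4 * (2 * (1 + I) * τ) := by
    rw [show β = m ^ 2 + n ^ 2 - 4 * τ by linear_combination -hτ]
    grind [I_sq]
  have hy : (1 - 4 * I) ^ 2 * (m - n * I) ^ 2 - (1 + 4 * I) * (m + n * I) ^ 2 = 4 * D := by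
    rw [hD]
    linear_combination (28 * I - 8) * hl' + (16 * (n : ℤ[i]) ^ 2 * I ^ 2
      + (-12 * n ^ 2 - 32 * m * n) * I + (16 * m ^ 2 + 8 * m * n - 16 * n ^ 2)) * I_sq
  have h := (onTwist_of_sq_sub_sq_eq hl hD hβ).onQuartic
  rw [hx, hy] at h
  obtain ⟨w, -, hw⟩ := h.exists_of_mul (by decide)
  exact ⟨w, hw⟩

theorem TwistedOddPart.exists_of_two_mul {τ D : ℤ[i]}
    (h : TwistedOddPart (2 * (1 + I) * τ) D) :
    ∃ (j : ℕ) (x t : ℤ[i]), τ = 2 ^ j * x ∧ x = I * D + 2 * t := by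
  obtain ⟨j, x, hj, hx, t, ht⟩ := h
  have h2 : 2 * τ = 2 ^ j * x :=
    mul_left_cancel₀ (show 1 + I ≠ 0 by decide) (by linear_combination hj)
  rcases j with _ | j
  · rw [pow_zero, one_mul] at h2
    simp [← h2, IsOdd] at hx
  · refine ⟨j, x, t, mul_left_cancel₀ (two_ne_zero (α := ℤ[i])) ?_, by linear_combination ht⟩
    rw [h2]
    ring

-- Otherwise `x * star D * (N - 2 * τ)` would be real, `x` being the odd part of `τ`; it is,
-- however, congruent to `I * (norm D) * N` modulo `2`.
theorem not_twistedOddPart_of_mul_sub_eq {τ D : ℤ[i]} {N l : ℤ} (hN : N % 2 = 1) (hD : IsOdd D)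
    (h : τ * (N - 2 * τ) = l * D) : ¬ TwistedOddPart (2 * (1 + I) * τ) D := by
  intro hT
  obtain ⟨j, x, t, hτ, hx⟩ := hT.exists_of_two_mul
  have hreal : (x * star D * (N - 2 * τ)).im = 0 := by
    have h' : x * star D * (N - 2 * τ) * (2 ^ j : ℤ) = (l * D.norm : ℤ) := by
      push_cast
      rw [Zsqrtd.norm_eq_mul_conj]
      linear_combination star D * h + star D * (N - 2 * τ) * (-hτ)
    have him := congrArg Zsqrtd.im h'
    rw [Zsqrtd.im_intCast, Zsqrtd.im_mul, Zsqrtd.im_intCast, Zsqrtd.re_intCast, mul_zero,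
      zero_add] at him
    exact (mul_eq_zero.1 him).resolve_right (by positivity)
  obtain ⟨u, hu⟩ : ∃ u, x * star D * (N - 2 * τ) = I * (D.norm * N : ℤ) + 2 * u := by
    refine ⟨t * star D * (N - 2 * τ) - I * D * star D * τ, ?_⟩
    push_cast
    rw [Zsqrtd.norm_eq_mul_conj]
    linear_combination star D * (N - 2 * τ) * hx
  have hnorm : D.norm % 2 = 1 := by
    rw [Zsqrtd.norm_def]
    rw [IsOdd] at hD
    rcases Int.even_or_odd' D.re with ⟨a, ha | ha⟩ <;>
      rcases Int.even_or_odd' D.im with ⟨b, hb | hb⟩ <;> simp only [ha, hb] at hD ⊢ <;>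
        ring_nf <;> omega
  have hnormN : D.norm * N % 2 = 1 := by rw [Int.mul_emod, hnorm, hN]; rfl
  rw [hu] at hreal
  generalize D.norm * N = K at *
  simp at hreal
  omega

theorem eq_zero_of_sub_eq_four_mul {m n l : ℤ} {D β τ : ℤ[i]} (hmn : (m ^ 2 - n ^ 2) % 2 = 1)
    (hl : m * n = 4 * l) (hD : D = -(4 + 3 * I) * (m ^ 2 - n ^ 2) + (28 * I - 8) * l)
    (hτ : (m : ℤ[i]) ^ 2 + n ^ 2 - β = 4 * τ)
    (hβ : ((m : ℤ[i]) ^ 2 + n ^ 2) ^ 2 - β ^ 2 = 8 * l * D) : l = 0 := by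
  have hDodd : IsOdd D := by
    rw [IsOdd, hD]
    norm_cast
    generalize m ^ 2 - n ^ 2 = p at *
    simp
    omega
  obtain ⟨w, hw⟩ := exists_onQuartic_of_sub_eq_four_mul hl hD hτ hβ
  have hmul : τ * ((m ^ 2 + n ^ 2 : ℤ) - 2 * τ) = l * D := by
    push_cast
    refine mul_left_cancel₀ (show (8 : ℤ[i]) ≠ 0 by decide) ?_
    rw [← mul_assoc 8 (l : ℤ[i]), ← hβ, show β = m ^ 2 + n ^ 2 - 4 * τ by linear_combination -hτ]
    ring
  by_contra hl0
  have hτ0 : τ ≠ 0 := by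
    rintro rfl
    rw [zero_mul] at hmul
    exact mul_ne_zero (Int.cast_ne_zero.2 hl0) hDodd.ne_zero hmul.symm
  have hT := hw.twistedOddPart (by simp [IsOdd])
    (mul_ne_zero (show 2 * (1 + I) ≠ 0 by decide) hτ0) hDodd
  refine not_twistedOddPart_of_mul_sub_eq ?_ hDodd hmul hT
  have : m ^ 2 + n ^ 2 = m ^ 2 - n ^ 2 + 2 * n ^ 2 := by ring
  omega

theorem exists_sub_or_add_eq_four_mul {N : ℤ} {β : ℤ[i]} (hN : N % 2 = 1) (hre : β.re % 2 = 1)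
    (him : β.im % 4 = 0) : ∃ τ, N - β = 4 * τ ∨ N + β = 4 * τ := by
  by_cases h : (N - β.re) % 4 = 0
  · refine ⟨⟨(N - β.re) / 4, -(β.im / 4)⟩, .inl ?_⟩
    simp [Zsqrtd.ext_iff]
    omega
  · refine ⟨⟨(N + β.re) / 4, β.im / 4⟩, .inr ?_⟩
    simp [Zsqrtd.ext_iff]
    omega

theorem eq_of_odd {r s x y : ℤ} (hrs : IsCoprime r s) (hr : r % 2 = 1) (h17 : 17 ∣ r - s)
    (hx : r ^ 2 + 16 * s ^ 2 = 17 * x ^ 2)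
    (hy : r ^ 4 + 16 * s ^ 2 * (r - 2 * s) ^ 2 = 17 * y ^ 2) : s = r := by
  obtain ⟨hs, β, hre, him, hβ⟩ := exists_sq_eq_one_add_four_I_mul_sq hrs hr h17 hy
  obtain ⟨m, n, l, hodd, hl, rfl, rfl⟩ := exists_of_sq_add_sixteen_mul_sq_eq hrs hr hs h17 hx
  obtain ⟨p, hp⟩ : ∃ p, m ^ 2 - n ^ 2 = p := ⟨_, rfl⟩
  have hsq : ((m : ℤ[i]) ^ 2 + n ^ 2) ^ 2 - β ^ 2
      = 8 * l * (-(4 + 3 * I) * (m ^ 2 - n ^ 2) + (28 * I - 8) * l) := by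
    refine mul_left_cancel₀ (show 1 + 4 * I ≠ 0 by decide) ?_
    have hN : (m ^ 2 + n ^ 2) ^ 2 = (m ^ 2 - n ^ 2) ^ 2 + 64 * l ^ 2 := by
      linear_combination (4 * m * n + 16 * l) * hl
    rw [mul_sub, ← hβ]
    norm_cast
    rw [hN, hp]
    simp [Zsqrtd.ext_iff, pow_two]
    constructor <;> ring
  have hN : (m ^ 2 + n ^ 2) % 2 = 1 := by
    rw [show m ^ 2 + n ^ 2 = m ^ 2 - n ^ 2 + 2 * n ^ 2 by ring]
    omega
  have hl0 : l = 0 := by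
    obtain ⟨τ, hτ | hτ⟩ := exists_sub_or_add_eq_four_mul hN hre him <;> push_cast at hτ
    · exact eq_zero_of_sub_eq_four_mul hodd hl rfl hτ hsq
    · exact eq_zero_of_sub_eq_four_mul (β := -β) hodd hl rfl (by rwa [sub_neg_eq_add])
        (by rwa [neg_sq])
  rw [hl0]
  ring

/-! ### Reduction to coprime integers -/

theorem eight_dvd_of_sq_add_eq {r s x : ℤ} (hr : r % 2 = 0) (hs : s % 2 = 1)
    (h : r ^ 2 + 4 * s ^ 2 = 17 * x ^ 2) : 8 ∣ r := by
  have hs8 := sq_emod_eight_of_odd hs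
  obtain ⟨R, rfl⟩ : 2 ∣ r := by omega
  have hx : 2 ∣ x := Int.prime_two.dvd_of_dvd_pow (n := 2) (by rw [mul_pow] at h; omega)
  obtain ⟨X, rfl⟩ := hx
  rw [mul_pow, mul_pow] at h
  rcases Int.even_or_odd' R with ⟨k, rfl | hR⟩
  · have hX : X % 2 = 1 := by
      by_contra hX
      obtain ⟨j, rfl⟩ : 2 ∣ X := by omega
      rw [mul_pow, mul_pow] at h
      omega
    have hX8 := sq_emod_eight_of_odd hX
    rw [mul_pow] at h
    have hk : 2 ∣ k := Int.prime_two.dvd_of_dvd_pow (n := 2) (by omega)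
    omega
  · have hR8 := sq_emod_eight_of_odd (a := R) (by omega)
    rcases Int.even_or_odd' X with ⟨j, rfl | hX⟩
    · rw [mul_pow] at h
      omega
    · have hX8 := sq_emod_eight_of_odd (a := X) (by omega)
      omega

theorem even_of_sq_add_eq {r s x : ℤ} (hr : r % 2 = 1) (h : r ^ 2 + 4 * s ^ 2 = 17 * x ^ 2) :
    s % 2 = 0 := by
  by_contra hs
  have hr8 := sq_emod_eight_of_odd hr
  have hs8 := sq_emod_eight_of_odd (a := s) (by omega)
  rcases Int.even_or_odd' x with ⟨j, rfl | hx⟩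
  · rw [mul_pow] at h
    omega
  · have hx8 := sq_emod_eight_of_odd (a := x) (by omega)
    omega

theorem eq_two_mul_of_eq_seventeen_mul_sq {r s x y : ℤ} (hrs : IsCoprime r s)
    (hx : r ^ 2 + 4 * s ^ 2 = 17 * x ^ 2)
    (hy : r ^ 4 + 4 * s ^ 2 * (r - s) ^ 2 = 17 * y ^ 2) : s = 2 * r := by
  have h17 := seventeen_dvd_sub_two_mul ⟨_, hx⟩ ⟨_, hy⟩
  rcases Int.emod_two_eq_zero_or_one r with hr | hr
  · exfalso
    obtain ⟨R, rfl⟩ : 2 ∣ r := by omega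
    have hs : s % 2 = 1 :=
      Int.odd_iff.1 (Int.isCoprime_two_left.1 hrs.of_mul_left_left)
    obtain ⟨l, hl⟩ := eight_dvd_of_sq_add_eq hr hs hx
    obtain rfl : R = 4 * l := by omega
    have hy2 : 2 ∣ 17 * y ^ 2 := hy ▸ ⟨8 * (4 * l) ^ 4 + 2 * s ^ 2 * (2 * (4 * l) - s) ^ 2, by ring⟩
    obtain ⟨z, rfl⟩ : 2 ∣ y := Int.prime_two.dvd_of_dvd_pow (n := 2) (by omega)
    exact pow_four_add_ne_seventeen_mul_sq hrs.of_mul_left_right.of_mul_left_right hs (by omega)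
      (y := z) (by linarith)
  · obtain ⟨t, rfl⟩ : 2 ∣ s := by have := even_of_sq_add_eq hr hx; omega
    rw [eq_of_odd hrs.of_mul_right_right hr (by omega) (x := x) (y := y) (by linarith)
      (by linarith)]

theorem exists_squarefree_mul_sq {A B W : ℤ} (hA : 0 < A) (h : A * B = W ^ 2) :
    ∃ (a : ℕ) (x y : ℤ), Squarefree a ∧ A = a * x ^ 2 ∧ B = a * y ^ 2 := by
  lift A to ℕ using hA.le
  obtain ⟨a, b, rfl, hsf⟩ := Nat.sq_mul_squarefree A
  push_cast at hA h ⊢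
  have hb : (b : ℤ) ≠ 0 := by rintro hb; simp [hb] at hA
  have ha : (a : ℤ) ≠ 0 := hA.ne'.imp fun h ↦ by simp [h]
  obtain ⟨V, rfl⟩ : (b : ℤ) ∣ W :=
    (Int.pow_dvd_pow_iff two_ne_zero).1 ⟨a * B, by rw [← h, mul_assoc]⟩
  have hV : a * B = V ^ 2 := mul_left_cancel₀ (pow_ne_zero 2 hb) (by linear_combination h)
  obtain ⟨y, rfl⟩ : (a : ℤ) ∣ V :=
    ((Int.squarefree_natCast.2 hsf).dvd_pow_iff_dvd two_ne_zero).1 ⟨B, hV.symm⟩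
  exact ⟨a, b, y, hsf, mul_comm _ _, mul_left_cancel₀ ha (by linear_combination hV)⟩

theorem odd_of_squarefree_of_eq_mul_sq {a r s y : ℤ} (ha : Squarefree a) (hrs : IsCoprime r s)
    (h₁ : a ∣ r ^ 2 + 4 * s ^ 2) (h₂ : r ^ 4 + 4 * s ^ 2 * (r - s) ^ 2 = a * y ^ 2) :
    Odd a := by
  by_contra ha2
  rw [Int.not_odd_iff_even, even_iff_two_dvd] at ha2
  have hr : 2 ∣ r := Int.prime_two.dvd_of_dvd_pow (n := 2) (by have := ha2.trans h₁; omega)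
  obtain ⟨R, rfl⟩ := hr
  have hs : Odd s := Int.isCoprime_two_left.1 hrs.of_mul_left_left
  obtain ⟨b, rfl⟩ := ha2
  have hb : b % 2 = 1 := by
    by_contra hb
    have := ha 2 (mul_dvd_mul_left 2 (by omega))
    norm_num [Int.isUnit_iff] at this
  have hodd : Odd (s * (s - 2 * R)) := hs.mul (hs.sub_even (even_two_mul R))
  have hodd8 := sq_emod_eight_of_odd (Int.odd_iff.1 hodd)
  have hby : b * y ^ 2 = 2 * (4 * R ^ 4 + (s * (s - 2 * R)) ^ 2) := by linarith
  rcases Int.even_or_odd' y with ⟨k, rfl | hk⟩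
  · rw [show b * (2 * k) ^ 2 = 4 * (b * k ^ 2) by ring] at hby
    omega
  · have : Odd (b * y ^ 2) := (Int.odd_iff.2 hb).mul (Odd.pow ⟨k, hk⟩)
    rw [hby, Int.odd_iff] at this
    omega

theorem dvd_seventeen {a r s : ℤ} (ha : Odd a) (hrs : IsCoprime r s)
    (h₁ : a ∣ r ^ 2 + 4 * s ^ 2) (h₂ : a ∣ r ^ 4 + 4 * s ^ 2 * (r - s) ^ 2) : a ∣ 17 := by
  have ha2 : IsCoprime a 2 := Int.isCoprime_two_right.2 ha
  have has : IsCoprime a s := by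
    refine IsCoprime.of_isCoprime_of_dvd_left ?_ h₁
    rw [show r ^ 2 + 4 * s ^ 2 = r ^ 2 + s * (4 * s) by ring]
    exact (hrs.pow_left (m := 2)).add_mul_left_left _
  have hsr : a ∣ s - 2 * r := by
    refine ((ha2.pow_right (n := 2)).mul_right (has.pow_right (n := 3))).dvd_of_dvd_mul_left ?_
    rw [show (2 : ℤ) ^ 2 * s ^ 3 * (s - 2 * r)
      = r ^ 4 + 4 * s ^ 2 * (r - s) ^ 2 - (r ^ 2 + 4 * s ^ 2) * r ^ 2 by ring]
    exact dvd_sub h₂ (h₁.mul_right _)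
  obtain ⟨k, hk⟩ := hsr
  have har : IsCoprime a r := by
    rw [show s = 2 * r + a * k by rw [← hk]; ring] at has
    exact has.of_add_mul_left_right.of_mul_right_right
  refine (har.pow_right (n := 2)).dvd_of_dvd_mul_right ?_
  rw [show 17 * r ^ 2 = r ^ 2 + 4 * s ^ 2 - (s - 2 * r) * (4 * (s + 2 * r)) by ring, hk]
  exact dvd_sub h₁ ((dvd_mul_right a k).mul_right _)

theorem eq_two_mul_of_mul_eq_sq {r s W : ℤ} (hrs : IsCoprime r s) (hr : r ≠ 0) (hs : s ≠ 0)
    (h : (r ^ 2 + 4 * s ^ 2) * (r ^ 4 + 4 * s ^ 2 * (r - s) ^ 2) = W ^ 2) : s = 2 * r := by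
  obtain ⟨a, x, y, ha, hx, hy⟩ := exists_squarefree_mul_sq (by positivity) h
  have h₁ : (a : ℤ) ∣ r ^ 2 + 4 * s ^ 2 := ⟨_, hx⟩
  have hodd := odd_of_squarefree_of_eq_mul_sq (Int.squarefree_natCast.2 ha) hrs h₁ hy
  have h17 : a ∣ 17 := Int.natCast_dvd_natCast.1 (dvd_seventeen hodd hrs h₁ ⟨_, hy⟩)
  rcases (Nat.dvd_prime (by norm_num)).1 h17 with rfl | rfl
  · rw [Nat.cast_one, one_mul] at hx hy
    exact absurd hy (pow_four_add_ne_sq hrs hr hs hx)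
  · exact eq_two_mul_of_eq_seventeen_mul_sq hrs hx hy

theorem eq_one_half_of_div_eq_div {u v : ℚ} (hu : u ≠ 0) (hv : v ≠ 0)
    (h : (u ^ 2 + 2 * u - 4) / (8 * u) = (4 - 3 * v - v ^ 3) / (4 * v)) : v = 1 / 2 := by
  have hden : (v.den : ℚ) ≠ 0 := Nat.cast_ne_zero.2 v.den_nz
  have hnum : v * v.den = v.num := Rat.mul_den_eq_num v
  have hdisc : (u * v + (v ^ 3 + 4 * v - 4)) ^ 2 = (v ^ 2 + 4) * (v ^ 4 + 4 * (v - 1) ^ 2) := by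
    rw [div_eq_div_iff (by positivity) (by positivity)] at h
    linear_combination v / 4 * h
  have hsq : IsSquare (((v.num ^ 2 + 4 * (v.den : ℤ) ^ 2) *
      (v.num ^ 4 + 4 * (v.den : ℤ) ^ 2 * (v.num - v.den) ^ 2) : ℤ) : ℚ) := by
    refine ⟨(u * v + (v ^ 3 + 4 * v - 4)) * v.den ^ 3, ?_⟩
    push_cast
    rw [← hnum]
    linear_combination -(v.den : ℚ) ^ 6 * hdisc
  obtain ⟨W, hW⟩ := Rat.isSquare_intCast_iff.1 hsq
  have hcop : IsCoprime v.num v.den := Int.isCoprime_iff_gcd_eq_one.2 v.reduced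
  have heq : (v.den : ℚ) = 2 * v.num := mod_cast eq_two_mul_of_mul_eq_sq hcop
    (Rat.num_ne_zero.2 hv) (Nat.cast_ne_zero.2 v.den_nz) (hW.trans (pow_two W).symm)
  refine mul_right_cancel₀ hden ?_
  rw [hnum, heq]
  ring

end LambdaEta

/-- `Im λ ∩ Im η = {19/16}`, where `λ(z) = (z² + 2z − 4)/(8z)` and
`η(z) = (4 − 3z − z³)/(4z)`: `19/16` lies in both images, and whenever
`λ(u) = η(v)` with `u, v` nonzero rationals, the common value is `19/16`. -/
theorem lambda_eta_intersection :
    (∃ u : ℚ, u ≠ 0 ∧ (u ^ 2 + 2 * u - 4) / (8 * u) = 19/16) ∧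
    (∃ v : ℚ, v ≠ 0 ∧ (4 - 3 * v - v ^ 3) / (4 * v) = 19/16) ∧
    ∀ u v : ℚ, u ≠ 0 → v ≠ 0 →
      (u ^ 2 + 2 * u - 4) / (8 * u) = (4 - 3 * v - v ^ 3) / (4 * v) →
      (u ^ 2 + 2 * u - 4) / (8 * u) = 19/16 := by
  refine ⟨⟨8, by norm_num, by norm_num⟩, ⟨1 / 2, by norm_num, by norm_num⟩, ?_⟩
  intro u v hu hv h
  rw [h, LambdaEta.eq_one_half_of_div_eq_div hu hv h]
  norm_num
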